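/- arXiv:2110.02013 — 2 statements merged into one kernel-verified Lean document; each statement's English description precedes it below -/
import Mathlib

section
/- Let C be any conformal cycle of the Heawood graph H14. Then there exists a conformal cross over C in H14. -/
namespace Paper

open SimpleGraph

variable {V : Type*} {W : Type*}

/-- `M` is a perfect matching of the vertex set `S` in the graph `G`:
a set of pairwise disjoint edges of `G`, all within `S`, covering every vertex of `S`. -/
def IsPMOn (G : SimpleGraph V) (S : Set V) (M : Set (Sym2 V)) : Prop :=
  (∀ e ∈ M, e ∈ G.edgeSet) ∧ (∀ e ∈ M, ∀ v ∈ e, v ∈ S) ∧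
    ∀ v ∈ S, ∃! e, e ∈ M ∧ v ∈ e

/-- `M` is a perfect matching of `G`. -/
def IsPM (G : SimpleGraph V) (M : Set (Sym2 V)) : Prop :=
  IsPMOn G Set.univ M

/-- The edges in `F` are pairwise vertex-disjoint. -/
def PairwiseDisjointEdges (F : Set (Sym2 V)) : Prop :=
  ∀ e ∈ F, ∀ f ∈ F, e ≠ f → ∀ x : V, x ∈ e → x ∉ f

/-- All edges of `G` have both endpoints in `S`. -/
def EdgesWithin (G : SimpleGraph V) (S : Set V) : Prop :=
  ∀ ⦃x y : V⦄, G.Adj x y → x ∈ S ∧ y ∈ S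

def ConnectedOn (G : SimpleGraph V) (S : Set V) : Prop :=
  S.Nonempty ∧ ∀ x ∈ S, ∀ y ∈ S, G.Reachable x y

/-- The graph `G` with vertex set `S` is a brace: it is connected and every matching of
size at most two extends to a perfect matching. -/
def IsBraceOn (G : SimpleGraph V) (S : Set V) : Prop :=
  EdgesWithin G S ∧ ConnectedOn G S ∧
    ∀ F : Set (Sym2 V), F ⊆ G.edgeSet → PairwiseDisjointEdges F → F.ncard ≤ 2 →
      ∃ M, IsPMOn G S M ∧ F ⊆ M

def IsBrace (G : SimpleGraph V) : Prop :=
  IsBraceOn G Set.univ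

def IsBipartitionOf (G : SimpleGraph V) (V1 V2 : Set V) : Prop :=
  Disjoint V1 V2 ∧ V1 ∪ V2 = Set.univ ∧ ∀ ⦃x y : V⦄, G.Adj x y → (x ∈ V1 ↔ y ∈ V2)

def IsBipartite (G : SimpleGraph V) : Prop :=
  ∃ V1 V2 : Set V, IsBipartitionOf G V1 V2

def MatchingCoveredOn (G : SimpleGraph V) (S : Set V) : Prop :=
  EdgesWithin G S ∧ ConnectedOn G S ∧ ∀ e ∈ G.edgeSet, ∃ M, IsPMOn G S M ∧ e ∈ M

def MatchingCovered (G : SimpleGraph V) : Prop :=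
  MatchingCoveredOn G Set.univ

/-- Every vertex of `A` is covered exactly once by an edge of `M ∩ Es`;
i.e. `M ∩ Es` is a perfect matching of the subgraph with vertex set `A` and edge set `Es`. -/
def MatchesExactly (M Es : Set (Sym2 V)) (A : Set V) : Prop :=
  ∀ v ∈ A, ∃! e, e ∈ M ∧ e ∈ Es ∧ v ∈ e

/-- `M` restricted to the edges of `P` with both endpoints in `A` is a
perfect matching of `A`; i.e. `M ∩ E(P ∩ A)` is a perfect matching of `P ∩ A`. -/
def WalkMConfOn (G : SimpleGraph V) (M : Set (Sym2 V)) {u v : V} (P : G.Walk u v)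
    (A : Set V) : Prop :=
  ∀ x ∈ A, ∃! e : Sym2 V, e ∈ M ∧ e ∈ P.edges ∧ (∀ y ∈ e, y ∈ A) ∧ x ∈ e

/-- The path `P` is `M`-conformal: `M ∩ E(P)` is a perfect matching of `P`. -/
def MConformalWalk (G : SimpleGraph V) (M : Set (Sym2 V)) {u v : V} (P : G.Walk u v) : Prop :=
  WalkMConfOn G M P {x | x ∈ P.support}

/-- The path `P` is internally `M`-conformal: removing both endpoints leaves
an `M`-conformal path. -/
def InternallyMConformal (G : SimpleGraph V) (M : Set (Sym2 V)) {u v : V}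
    (P : G.Walk u v) : Prop :=
  WalkMConfOn G M P {x | x ∈ P.support ∧ x ≠ u ∧ x ≠ v}

/-- The path `P` is `M`-alternating: there is a set `S` of endpoints of `P`
such that `P − S` is `M`-conformal. -/
def MAlternating (G : SimpleGraph V) (M : Set (Sym2 V)) {u v : V} (P : G.Walk u v) : Prop :=
  ∃ S ⊆ ({u, v} : Set V), WalkMConfOn G M P {x | x ∈ P.support ∧ x ∉ S}

/-- The cycle `C` is `M`-conformal: `M ∩ E(C)` is a perfect matching of `C`. -/
def MConformalCycle (G : SimpleGraph V) (M : Set (Sym2 V)) {c : V} (C : G.Walk c c) : Prop :=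
  ∀ x ∈ C.support, ∃! e, e ∈ M ∧ e ∈ C.edges ∧ x ∈ e

/-- The cycle `C` is conformal in the graph `G` with vertex set `S`:
`G − V(C)` has a perfect matching. -/
def ConformalCycleOn (G : SimpleGraph V) (S : Set V) {c : V} (C : G.Walk c c) : Prop :=
  ∃ M, IsPMOn G (S \ {x | x ∈ C.support}) M

def ConformalCycle (G : SimpleGraph V) {c : V} (C : G.Walk c c) : Prop :=
  ConformalCycleOn G Set.univ C

/-- The four vertices appear on the cycle `C` in the listed cyclic order. -/
def InCyclicOrder (G : SimpleGraph V) {c : V} (C : G.Walk c c) (s1 s2 t1 t2 : V) : Prop :=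
  ∃ n : ℕ, List.Sublist [s1, s2, t1, t2] (C.support.tail.rotate n) ∨
    List.Sublist [s1, s2, t1, t2] (C.support.tail.reverse.rotate n)

/-- The paths `P1` (from `s1` to `t1`) and `P2` (from `s2` to `t2`) form a matching
cross over the cycle `C` with respect to the perfect matching `M` of `(G, S)`. -/
def IsMatchingCrossOn (G : SimpleGraph V) (S : Set V) {c s1 t1 s2 t2 : V}
    (C : G.Walk c c) (M : Set (Sym2 V)) (P1 : G.Walk s1 t1) (P2 : G.Walk s2 t2) : Prop :=
  IsPMOn G S M ∧ [s1, s2, t1, t2].Nodup ∧ InCyclicOrder G C s1 s2 t1 t2 ∧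
    P1.IsPath ∧ P2.IsPath ∧ MAlternating G M P1 ∧ MAlternating G M P2 ∧
    (∀ x : V, x ∈ P1.support → x ∉ P2.support) ∧
    (∀ x ∈ P1.support, x ≠ s1 → x ≠ t1 → x ∉ C.support) ∧
    (∀ x ∈ P2.support, x ≠ s2 → x ≠ t2 → x ∉ C.support)

def HasMatchingCrossOn (G : SimpleGraph V) (S : Set V) {c : V} (C : G.Walk c c) : Prop :=
  ∃ (M : Set (Sym2 V)) (s1 t1 s2 t2 : V) (P1 : G.Walk s1 t1) (P2 : G.Walk s2 t2),
    IsMatchingCrossOn G S C M P1 P2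

def HasMatchingCross (G : SimpleGraph V) {c : V} (C : G.Walk c c) : Prop :=
  HasMatchingCrossOn G Set.univ C

/-- `C + P1 + P2` is a conformal subgraph of `(G, S)`. -/
def CrossConformalOn (G : SimpleGraph V) (S : Set V) {c s1 t1 s2 t2 : V}
    (C : G.Walk c c) (P1 : G.Walk s1 t1) (P2 : G.Walk s2 t2) : Prop :=
  ∃ N, IsPMOn G S N ∧
    MatchesExactly N
      ({f | f ∈ C.edges} ∪ {f | f ∈ P1.edges} ∪ {f | f ∈ P2.edges})
      ({x | x ∈ C.support} ∪ {x | x ∈ P1.support} ∪ {x | x ∈ P2.support})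

/-- There is a conformal cross over the cycle `C` in `G`. -/
def HasConformalCross (G : SimpleGraph V) {c : V} (C : G.Walk c c) : Prop :=
  ∃ (M : Set (Sym2 V)) (s1 t1 s2 t2 : V) (P1 : G.Walk s1 t1) (P2 : G.Walk s2 t2),
    IsMatchingCrossOn G Set.univ C M P1 P2 ∧ CrossConformalOn G Set.univ C P1 P2

/-- A bisubdivision of the graph `H` inside the graph `G`: every edge of `H` is replaced
by a path of odd length (i.e., subdivided an even number of times), and those paths
pairwise meet only in branch vertices. -/
structure Bisubdivision (H : SimpleGraph W) (G : SimpleGraph V) where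
  bv : W → V
  bv_inj : Function.Injective bv
  link : ∀ ⦃x y : W⦄, H.Adj x y → G.Walk (bv x) (bv y)
  link_isPath : ∀ ⦃x y : W⦄ (h : H.Adj x y), (link h).IsPath
  link_odd : ∀ ⦃x y : W⦄ (h : H.Adj x y), Odd (link h).length
  link_symm : ∀ ⦃x y : W⦄ (h : H.Adj x y), link h.symm = (link h).reverse
  link_branch : ∀ ⦃x y : W⦄ (h : H.Adj x y) (z : W), bv z ∈ (link h).support → z = x ∨ z = y
  link_meet : ∀ ⦃x y x' y' : W⦄ (h : H.Adj x y) (h' : H.Adj x' y'), s(x, y) ≠ s(x', y') →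
    ∀ v : V, v ∈ (link h).support → v ∈ (link h').support →
      (v = bv x ∨ v = bv y) ∧ (v = bv x' ∨ v = bv y')

def Bisubdivision.verts {H : SimpleGraph W} {G : SimpleGraph V}
    (L : Bisubdivision H G) : Set V :=
  {v | ∃ (x y : W) (h : H.Adj x y), v ∈ (L.link h).support}

def Bisubdivision.edgeSet {H : SimpleGraph W} {G : SimpleGraph V}
    (L : Bisubdivision H G) : Set (Sym2 V) :=
  {e | ∃ (x y : W) (h : H.Adj x y), e ∈ (L.link h).edges}

/-- The bisubdivision `L` is an `M`-conformal subgraph of `G`. -/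
def Bisubdivision.MConformal {H : SimpleGraph W} {G : SimpleGraph V}
    (L : Bisubdivision H G) (M : Set (Sym2 V)) : Prop :=
  MatchesExactly M L.edgeSet L.verts

/-- The bisubdivision `L` is a conformal subgraph of `(G, S)`. -/
def Bisubdivision.ConformalOn {H : SimpleGraph W} {G : SimpleGraph V}
    (L : Bisubdivision H G) (S : Set V) : Prop :=
  ∃ M, IsPMOn G S M ∧ L.MConformal M

abbrev K33 : SimpleGraph (Fin 3 ⊕ Fin 3) := completeBipartiteGraph (Fin 3) (Fin 3)

/-- `G` contains a conformal bisubdivision of `K_{3,3}`. -/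
def ContainsK33 (G : SimpleGraph V) : Prop :=
  ∃ L : Bisubdivision K33 G, L.ConformalOn Set.univ

def K33Free (G : SimpleGraph V) : Prop :=
  ¬ ContainsK33 G

def C4verts (a1 b1 a2 b2 : V) : Set V := {a1, b1, a2, b2}

def C4edges (a1 b1 a2 b2 : V) : Set (Sym2 V) := {s(a1, b1), s(b1, a2), s(a2, b2), s(b2, a1)}

/-- `a1 b1 a2 b2` is a cycle of length four in `G`. -/
def IsC4In (G : SimpleGraph V) (a1 b1 a2 b2 : V) : Prop :=
  [a1, b1, a2, b2].Nodup ∧ G.Adj a1 b1 ∧ G.Adj b1 a2 ∧ G.Adj a2 b2 ∧ G.Adj b2 a1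

/-- `B` is a 4-cycle sum of the graphs `Bi i` (with vertex sets `Si i`)
at the common conformal 4-cycle `a1 b1 a2 b2`. -/
def IsFourCycleSum {ℓ : ℕ} (B : SimpleGraph V) (Bi : Fin ℓ → SimpleGraph V)
    (Si : Fin ℓ → Set V) (a1 b1 a2 b2 : V) : Prop :=
  (∀ i, EdgesWithin (Bi i) (Si i)) ∧
  (∀ i, IsC4In (Bi i) a1 b1 a2 b2) ∧
  (∀ i, ∃ M, IsPMOn (Bi i) (Si i \ C4verts a1 b1 a2 b2) M) ∧
  (∀ i j, i ≠ j → Si i ∩ Si j = C4verts a1 b1 a2 b2) ∧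
  (⋃ i, Si i) = Set.univ ∧
  ∃ D ⊆ C4edges a1 b1 a2 b2, B.edgeSet = (⋃ i, (Bi i).edgeSet) \ D

/-- `B` is a maximal 4-cycle sum of the braces `Bi i` at the 4-cycle `a1 b1 a2 b2`. -/
def IsMaxFourCycleSumOfBraces {ℓ : ℕ} (B : SimpleGraph V) (Bi : Fin ℓ → SimpleGraph V)
    (Si : Fin ℓ → Set V) (a1 b1 a2 b2 : V) : Prop :=
  IsFourCycleSum B Bi Si a1 b1 a2 b2 ∧ (∀ i, IsBraceOn (Bi i) (Si i)) ∧
    ¬ ∃ ℓ' : ℕ, ℓ < ℓ' ∧ ∃ (Hi : Fin ℓ' → SimpleGraph V) (Ti : Fin ℓ' → Set V),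
      IsFourCycleSum B Hi Ti a1 b1 a2 b2 ∧ ∀ i, IsBraceOn (Hi i) (Ti i)

/-- `∂(X)`: the set of edges of `G` with exactly one endpoint in `X`. -/
def edgeCut (G : SimpleGraph V) (X : Set V) : Set (Sym2 V) :=
  {e | e ∈ G.edgeSet ∧ ∃ x y : V, e = s(x, y) ∧ x ∈ X ∧ y ∉ X}

/-- `∂(X)` is a tight cut of the graph `G` with vertex set `S`. -/
def IsTightCutOn (G : SimpleGraph V) (S X : Set V) : Prop :=
  ∀ M, IsPMOn G S M → (edgeCut G X ∩ M).ncard = 1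

def IsTightCut (G : SimpleGraph V) (X : Set V) : Prop :=
  IsTightCutOn G Set.univ X

/-- The minority of `X` with respect to the colour classes `V1`, `V2`. -/
noncomputable def minority (V1 V2 X : Set V) : Set V :=
  if (X ∩ V1).ncard < (X ∩ V2).ncard then X ∩ V1 else X ∩ V2

/-- `P1` and `P2` are `M`-alternating paths of the same type. -/
def SameType (G : SimpleGraph V) (M : Set (Sym2 V)) {s1 t1 s2 t2 : V}
    (P1 : G.Walk s1 t1) (P2 : G.Walk s2 t2) : Prop :=
  (InternallyMConformal G M P1 ∧ InternallyMConformal G M P2) ∨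
  (MConformalWalk G M P1 ∧ MConformalWalk G M P2) ∨
  ((¬ InternallyMConformal G M P1 ∧ ¬ MConformalWalk G M P1) ∧
    (¬ InternallyMConformal G M P2 ∧ ¬ MConformalWalk G M P2))

/-- There is a strong matching cross over `C` in `(G, S)` w.r.t. colour classes `V1, V2`. -/
def HasStrongMatchingCrossOn (G : SimpleGraph V) (S V1 V2 : Set V) {c : V}
    (C : G.Walk c c) : Prop :=
  ∃ (M : Set (Sym2 V)) (s1 t1 s2 t2 : V) (P1 : G.Walk s1 t1) (P2 : G.Walk s2 t2),
    IsMatchingCrossOn G S C M P1 P2 ∧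
    (V1 ∩ {s1, s2, t1, t2}).ncard = (V2 ∩ {s1, s2, t1, t2}).ncard ∧
    SameType G M P1 P2

/-- `s1 s2 t1 t2` appear in this cyclic order on the 4-cycle `a1 b1 a2 b2`. -/
def CyclicOrderC4 (a1 b1 a2 b2 s1 s2 t1 t2 : V) : Prop :=
  ∃ n : ℕ, [s1, s2, t1, t2] = [a1, b1, a2, b2].rotate n ∨
    [s1, s2, t1, t2] = [b2, a2, b1, a1].rotate n

/-- `P1, P2` form a matching cross over the 4-cycle `a1 b1 a2 b2` w.r.t. `M`. -/
def IsCrossOverC4 (G : SimpleGraph V) (M : Set (Sym2 V)) (a1 b1 a2 b2 : V)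
    {s1 t1 s2 t2 : V} (P1 : G.Walk s1 t1) (P2 : G.Walk s2 t2) : Prop :=
  [s1, s2, t1, t2].Nodup ∧ CyclicOrderC4 a1 b1 a2 b2 s1 s2 t1 t2 ∧
    P1.IsPath ∧ P2.IsPath ∧ MAlternating G M P1 ∧ MAlternating G M P2 ∧
    (∀ z : V, z ∈ P1.support → z ∉ P2.support) ∧
    (∀ z ∈ P1.support, z ≠ s1 → z ≠ t1 → z ∉ C4verts a1 b1 a2 b2) ∧
    (∀ z ∈ P2.support, z ≠ s2 → z ≠ t2 → z ∉ C4verts a1 b1 a2 b2)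

/-- The Heawood graph on `ZMod 14`. -/
def heawood : SimpleGraph (ZMod 14) :=
  SimpleGraph.fromRel fun i j => j = i + 1 ∨ (Even i.val ∧ j = i + 5)

/-- The Rotunda: three cubes glued along a common 4-cycle whose edges are then deleted. -/
def rotunda : SimpleGraph (Fin 4 ⊕ Fin 3 × Fin 4) :=
  SimpleGraph.fromRel fun x y =>
    match x, y with
    | Sum.inl j, Sum.inr p => j = p.2
    | Sum.inr p, Sum.inr q => p.1 = q.1 ∧ q.2 = p.2 + 1
    | _, _ => False

/-- `F` is an `S`-cover in `G`. -/
def IsSCover (G : SimpleGraph V) (S : Set V) (F : Set (Sym2 V)) : Prop :=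
  F ⊆ G.edgeSet ∧ (∀ e ∈ F, ∃ v ∈ S, v ∈ e) ∧ ∀ v ∈ S, ∃ e ∈ F, v ∈ e

/-- `F` is contained in some perfect matching of `G`. -/
def Extendible (G : SimpleGraph V) (F : Set (Sym2 V)) : Prop :=
  ∃ M, IsPM G M ∧ F ⊆ M

/-- `(G, S)` is an `F`-instance of 2-MLP for `(a1, a2)` and `(b1, b2)`. -/
def TwoMLPInstanceOn (G : SimpleGraph V) (S : Set V) (a1 a2 b1 b2 : V)
    (F : Set (Sym2 V)) : Prop :=
  ∃ M, IsPMOn G S M ∧ F ⊆ M ∧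
    ∃ (P1 : G.Walk a1 b1) (P2 : G.Walk a2 b2), P1.IsPath ∧ P2.IsPath ∧
      InternallyMConformal G M P1 ∧ InternallyMConformal G M P2 ∧
      ∀ x : V, x ∈ P1.support → x ∉ P2.support

/-- `B − u − v + pq`: delete the vertices `u, v` and add the edge `pq`. -/
def deleteAdd (B : SimpleGraph V) (u v p q : V) : SimpleGraph V :=
  SimpleGraph.fromRel fun x y =>
    (B.Adj x y ∨ (x = p ∧ y = q)) ∧ x ≠ u ∧ x ≠ v ∧ y ≠ u ∧ y ≠ v

/-- `B` plus two new vertices `x = Sum.inr 0` and `y = Sum.inr 1` together with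
the edges `xy, x b1, x b2, y a1, y a2`. -/
def plusXY (B : SimpleGraph V) (a1 a2 b1 b2 : V) : SimpleGraph (V ⊕ Fin 2) :=
  SimpleGraph.fromRel fun p q =>
    (∃ a b : V, p = Sum.inl a ∧ q = Sum.inl b ∧ B.Adj a b) ∨
    (p = Sum.inr 0 ∧ q = Sum.inr 1) ∨
    (p = Sum.inr 0 ∧ (q = Sum.inl b1 ∨ q = Sum.inl b2)) ∨
    (p = Sum.inr 1 ∧ (q = Sum.inl a1 ∨ q = Sum.inl a2))

/-- The endpoints `q1, q2` (on the 4-cycle) belong to the same colour class. -/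
def PrecrossDaring (V1 V2 : Set V) (q1 q2 : V) : Prop :=
  (q1 ∈ V1 ∧ q2 ∈ V1) ∨ (q1 ∈ V2 ∧ q2 ∈ V2)

/-- `(P1, P2, Q, M)` is a diffuse `C'`-`M`-precross through the 4-cycle `a1 b1 a2 b2`
in the graph `G` with vertex set `S` and colour classes `V1, V2`. -/
def DiffusePrecross (G : SimpleGraph V) (S V1 V2 : Set V) (a1 b1 a2 b2 : V)
    {c p1 q1 p2 q2 x1 x2 : V} (C' : G.Walk c c) (M : Set (Sym2 V))
    (P1 : G.Walk p1 q1) (P2 : G.Walk p2 q2) (Q : G.Walk x1 x2) : Prop :=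
  IsPMOn G S M ∧ P1.IsPath ∧ P2.IsPath ∧ Q.IsPath ∧
  MAlternating G M P1 ∧ MAlternating G M P2 ∧ MAlternating G M Q ∧
  (∀ z : V, z ∈ P1.support → z ∉ P2.support) ∧
  (∀ z : V, z ∈ P1.support → z ∉ Q.support) ∧
  (∀ z : V, z ∈ P2.support → z ∉ Q.support) ∧
  (∀ z ∈ P1.support, z ≠ p1 → z ≠ q1 → z ∉ C'.support) ∧
  (∀ z ∈ P2.support, z ≠ p2 → z ≠ q2 → z ∉ C'.support) ∧
  (∀ z ∈ Q.support, z ≠ x1 → z ≠ x2 → z ∉ C'.support) ∧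
  x1 ∈ C'.support ∧ x2 ∈ C'.support ∧
  p1 ∈ C'.support ∧ q1 ∈ C4verts a1 b1 a2 b2 ∧
  p2 ∈ C'.support ∧ q2 ∈ C4verts a1 b1 a2 b2 ∧
  (∀ Wk : G.Walk p1 p2, (∀ e ∈ Wk.edges, e ∈ C'.edges) → ∃ z ∈ Wk.support, z ∈ Q.support) ∧
  (∀ U ∈ ({V1, V2} : Set (Set V)), (q1 ∈ U ∨ q2 ∈ U) →
    ∃ q : V, (q = q1 ∨ q = q2) ∧ q ∈ U ∧ ∃ e ∈ M, e ∈ C4edges a1 b1 a2 b2 ∧ q ∈ e)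

/-- A daring diffuse precross is successful. -/
def PrecrossSuccessful (G : SimpleGraph V) (V1 V2 : Set V) (M : Set (Sym2 V))
    {p1 q1 p2 q2 : V} (P1 : G.Walk p1 q1) (P2 : G.Walk p2 q2) : Prop :=
  PrecrossDaring V1 V2 q1 q2 ∧
  ((InternallyMConformal G M P1 ∧ MConformalWalk G M P2) ∨
   (InternallyMConformal G M P2 ∧ MConformalWalk G M P1) ∨
   (Even P1.length ∧ Even P2.length ∧
     ((∃ e ∈ M, e ∈ P1.edges ∧ p1 ∈ e) ↔ ¬ ∃ e ∈ M, e ∈ P2.edges ∧ p2 ∈ e)))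

/-! ### A finite search certificate for crosses in the Heawood graph -/

/-- The vertex with number `n`, as a constructor term. -/
abbrev hv (n : ℕ) (h : n < 14 := by decide) : ZMod 14 := (⟨n, h⟩ : Fin 14)

/-- Fast equality test. -/
def eqb (a b : ZMod 14) : Bool := Nat.beq (Fin.val (n := 14) a) (Fin.val (n := 14) b)

theorem eqb_iff (a b : ZMod 14) : eqb a b = true ↔ a = b := by
  unfold eqb
  rw [Nat.beq_eq]
  exact Fin.val_inj (n := 14)

/-- Fast membership test. -/
def memb (a : ZMod 14) : List (ZMod 14) → Bool
  | [] => false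
  | b :: l => eqb a b || memb a l

theorem memb_iff (a : ZMod 14) (l : List (ZMod 14)) : memb a l = true ↔ a ∈ l := by
  induction l with
  | nil => simp [memb]
  | cons b l ih => simp [memb, eqb_iff, ih]

def allV : List (ZMod 14) :=
  [hv 0, hv 1, hv 2, hv 3, hv 4, hv 5, hv 6, hv 7, hv 8, hv 9, hv 10, hv 11, hv 12, hv 13]

theorem mem_allV (v : ZMod 14) : v ∈ allV := by
  revert v; decide

/-- The neighbourhoods in the Heawood graph. -/
def nbTable : List (List (ZMod 14)) :=
  [[hv 1, hv 13, hv 5], [hv 0, hv 2, hv 10], [hv 1, hv 3, hv 7], [hv 2, hv 4, hv 12],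
   [hv 3, hv 5, hv 9], [hv 4, hv 6, hv 0], [hv 5, hv 7, hv 11], [hv 6, hv 8, hv 2],
   [hv 7, hv 9, hv 13], [hv 8, hv 10, hv 4], [hv 9, hv 11, hv 1], [hv 10, hv 12, hv 6],
   [hv 11, hv 13, hv 3], [hv 12, hv 0, hv 8]]

def lookupAt : List (List (ZMod 14)) → ℕ → List (ZMod 14)
  | [], _ => []
  | x :: _, 0 => x
  | _ :: t, n + 1 => lookupAt t n

def nb (v : ZMod 14) : List (ZMod 14) := lookupAt nbTable (Fin.val (n := 14) v)

instance : DecidableRel heawood.Adj := by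
  unfold heawood; infer_instance

theorem adj_iff (a b : ZMod 14) : heawood.Adj a b ↔ b ∈ nb a := by
  revert a b; decide +kernel

/-- The partner of `a` in the matching pairing up consecutive entries of a list. -/
def partner (a : ZMod 14) : List (ZMod 14) → ZMod 14
  | x :: y :: t => bif eqb a x then y else bif eqb a y then x else partner a t
  | _ => a

/-- `a` and `b` occur consecutively in the list (in some order). -/
def inf2 (a b : ZMod 14) : List (ZMod 14) → Bool
  | [] => false
  | x :: l =>
    match l with
    | [] => false
    | y :: _ => ((eqb a x && eqb b y) || (eqb a y && eqb b x)) || inf2 a b l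

/-- `F` pairs up all vertices along edges, and pairs up `L` along consecutive entries. -/
def okF (F L : List (ZMod 14)) : Bool :=
  allV.all (fun v => memb (partner v F) (nb v) && eqb (partner (partner v F) F) v) &&
    L.all (fun v => inf2 v (partner v F) L)

/-- The candidate matchings (as flat lists) of a set of zero or four vertices. -/
def mats : List (ZMod 14) → List (List (ZMod 14))
  | [] => [[]]
  | [a, b, c, d] => [[a, b, c, d], [a, c, b, d], [a, d, b, c]]
  | _ => []

def sub4 (a b c d : ZMod 14) (L : List (ZMod 14)) : Bool := subl [a, b, c, d] L
where
  subl : List (ZMod 14) → List (ZMod 14) → Bool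
  | [], _ => true
  | _ :: _, [] => false
  | x :: t, y :: l => bif eqb x y then subl t l else subl (x :: t) l

theorem subl_sound (K L : List (ZMod 14)) (h : sub4.subl K L = true) : K.Sublist L := by
  induction L generalizing K with
  | nil => cases K <;> simp [sub4.subl] at h ⊢
  | cons y l ih =>
    cases K with
    | nil => simp
    | cons x t =>
      by_cases hxy : eqb x y = true
      · have := (eqb_iff _ _).1 hxy
        subst this
        simp only [sub4.subl, hxy, cond_true] at h
        exact (ih _ h).cons_cons _
      · simp only [sub4.subl, Bool.not_eq_true _ ▸ hxy, cond_false] at h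
        exact (ih _ h).cons _

/-- Two crossing chords. -/
def chordCase (L : List (ZMod 14)) : Bool :=
  (mats (allV.filter (fun v => !memb v L))).any (fun R => okF (L ++ R) L) &&
    L.any (fun s1 => (nb s1).any (fun t1 => memb t1 L &&
      L.any (fun s2 => (nb s2).any (fun t2 => sub4 s1 s2 t1 t2 L))))

/-- Two crossing paths of length three. -/
def quadCase (L : List (ZMod 14)) : Bool :=
  L.any (fun s1 => (nb s1).any (fun x => !memb x L && (nb x).any (fun y => !memb y L &&
    (nb y).any (fun t1 => memb t1 L &&
      L.any (fun s2 => (nb s2).any (fun z => !memb z L && !memb z [x, y] &&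
        (nb z).any (fun w => !memb w L && !memb w [x, y] &&
          (nb w).any (fun t2 => sub4 s1 s2 t1 t2 L &&
            (mats (allV.filter (fun v => !memb v (x :: y :: z :: w :: L)))).any
              (fun R => okF (L ++ x :: y :: z :: w :: R) L &&
                eqb (partner x (L ++ x :: y :: z :: w :: R)) y &&
                eqb (partner z (L ++ x :: y :: z :: w :: R)) w)))))))))

/-- Hall obstruction: two vertices outside of `L` with at most one neighbour outside of `L`. -/
def hallCase (L : List (ZMod 14)) : Bool :=
  allV.any (fun z => !memb z L &&
    allV.any (fun u => !memb u L && (nb u).all (fun a => eqb a z || memb a L) &&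
      allV.any (fun v => !memb v L && !eqb u v && (nb v).all (fun a => eqb a z || memb a L))))

def leafCheck (L : List (ZMod 14)) : Bool :=
  match L.length with
  | 2 => true
  | 6 => quadCase L
  | 8 => hallCase L
  | 12 => hallCase L
  | _ => chordCase L

/-- Depth first search through all paths from `v` to `c` avoiding the numbers below `c`. -/
def dfs (c : ZMod 14) : ℕ → List (ZMod 14) → ZMod 14 → Bool
  | 0, _, _ => false
  | n + 1, acc, v =>
    bif eqb v c then leafCheck (v :: acc)
    else (nb v).all (fun w => (Nat.blt (Fin.val (n := 14) w) (Fin.val (n := 14) c) || memb w acc) || dfs c n (v :: acc) w)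

theorem dfs_all : allV.all (fun c => (nb c).all (fun v => dfs c 15 [] v)) = true := by
  decide +kernel

theorem dfs_sound (c : ZMod 14) (n : ℕ) (acc : List (ZMod 14)) (v : ZMod 14)
    (h : dfs c n acc v = true) (p : heawood.Walk v c) (hp : p.IsPath)
    (hmin : ∀ x ∈ p.support, ¬ Nat.blt (Fin.val (n := 14) x) (Fin.val (n := 14) c) = true)
    (hd : ∀ x ∈ p.support, x ∉ acc) : leafCheck (p.support.reverse ++ acc) = true := by
  induction n generalizing acc v with
  | zero => simp [dfs] at h
  | succ n ih =>
    cases p with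
    | nil =>
      have hcc : eqb c c = true := (eqb_iff _ _).2 rfl
      simpa [dfs, hcc] using h
    | @cons _ w _ hvw q =>
      rw [Walk.cons_isPath_iff] at hp
      have hvc : eqb v c = false := by
        rw [Bool.eq_false_iff]
        intro hh
        rw [eqb_iff] at hh
        exact hp.2 (hh ▸ q.end_mem_support)
      simp only [dfs, hvc, cond_false, List.all_eq_true, Bool.or_eq_true, memb_iff] at h
      have hw := h w ((adj_iff _ _).1 hvw)
      have hwacc : w ∉ acc := hd w (by simp)
      have := ih (v :: acc) w (hw.resolve_left fun h => h.elim (hmin w (by simp)) hwacc) q hp.1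
        (fun x hx => hmin x (by simp [hx])) (by
        intro x hx
        simp only [List.mem_cons, not_or]
        refine ⟨fun hxv => hp.2 (hxv ▸ hx), hd x (by simp [hx])⟩)
      simpa using this

theorem inf2_sound {a b u v : ZMod 14} (p : heawood.Walk u v) (h : inf2 a b p.support = true) :
    s(a, b) ∈ p.edges := by
  induction p with
  | nil => simp [inf2] at h
  | @cons u w v huw q ih =>
    have hq : q.support = w :: q.support.tail := q.cons_tail_support.symm
    have h' : (((a = u ∧ b = w) ∨ (a = w ∧ b = u)) ∨ inf2 a b q.support = true) := by
      rw [Walk.support_cons, hq] at h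
      rw [hq]
      simpa only [inf2, Bool.or_eq_true, Bool.and_eq_true, eqb_iff] using h
    simp only [Walk.edges_cons, List.mem_cons]
    rcases h' with (⟨rfl, rfl⟩ | ⟨rfl, rfl⟩) | h'
    · exact Or.inl rfl
    · exact Or.inl Sym2.eq_swap
    · exact Or.inr (ih h')

/-- The edge set of the matching given by an involution. -/
def invM (f : ZMod 14 → ZMod 14) : Set (Sym2 (ZMod 14)) := {e | ∃ v, e = s(v, f v)}

theorem invM_eq {f : ZMod 14 → ZMod 14} (hf : ∀ v, f (f v) = v) {e : Sym2 (ZMod 14)}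
    (he : e ∈ invM f) {v : ZMod 14} (hv : v ∈ e) : e = s(v, f v) := by
  obtain ⟨w, rfl⟩ := he
  rcases Sym2.mem_iff.1 hv with rfl | rfl
  · rfl
  · rw [hf, Sym2.eq_swap]

theorem invM_pm {f : ZMod 14 → ZMod 14} (hf : ∀ v, f (f v) = v)
    (ha : ∀ v, heawood.Adj v (f v)) : IsPMOn heawood Set.univ (invM f) := by
  refine ⟨?_, fun _ _ _ _ => Set.mem_univ _, ?_⟩
  · rintro e ⟨v, rfl⟩
    exact ha v
  · intro v _
    exact ⟨s(v, f v), ⟨⟨v, rfl⟩, by simp⟩, fun e he => invM_eq hf he.1 he.2⟩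

theorem cross_of {c : ZMod 14} (C : heawood.Walk c c) (f : ZMod 14 → ZMod 14)
    (hf : ∀ v, f (f v) = v) (ha : ∀ v, heawood.Adj v (f v))
    (hC : ∀ v ∈ C.support, s(v, f v) ∈ C.edges) {s1 t1 s2 t2 : ZMod 14}
    (P1 : heawood.Walk s1 t1) (P2 : heawood.Walk s2 t2) (hP1 : P1.IsPath) (hP2 : P2.IsPath)
    (hnd : [s1, s2, t1, t2].Nodup) (hco : InCyclicOrder heawood C s1 s2 t1 t2)
    (hs1 : s1 ∈ C.support) (hs2 : s2 ∈ C.support) (ht1 : t1 ∈ C.support) (ht2 : t2 ∈ C.support)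
    (hdis : ∀ x : ZMod 14, x ∈ P1.support → x ∉ P2.support)
    (hi1 : ∀ x ∈ P1.support, x ≠ s1 → x ≠ t1 → x ∉ C.support ∧ s(x, f x) ∈ P1.edges)
    (hi2 : ∀ x ∈ P2.support, x ≠ s2 → x ≠ t2 → x ∉ C.support ∧ s(x, f x) ∈ P2.edges) :
    HasConformalCross heawood C := by
  have hCf : ∀ v ∈ C.support, f v ∈ C.support := fun v hv =>
    C.snd_mem_support_of_mem_edges (hC v hv)
  have alt : ∀ {s t : ZMod 14} (P : heawood.Walk s t), s ∈ C.support → t ∈ C.support →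
      (∀ x ∈ P.support, x ≠ s → x ≠ t → x ∉ C.support ∧ s(x, f x) ∈ P.edges) →
      MAlternating heawood (invM f) P := by
    intro s t P hs ht hi
    refine ⟨{s, t}, subset_rfl, ?_⟩
    rintro x ⟨hx, hxs⟩
    simp only [Set.mem_insert_iff, Set.mem_singleton_iff, not_or] at hxs
    obtain ⟨hxC, hxe⟩ := hi x hx hxs.1 hxs.2
    have hfx : f x ∉ C.support := fun h => hxC (by simpa [hf] using hCf _ h)
    refine ⟨s(x, f x), ⟨⟨x, rfl⟩, hxe, ?_, by simp⟩, fun e he => invM_eq hf he.1 he.2.2.2⟩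
    intro y hy
    rcases Sym2.mem_iff.1 hy with rfl | rfl
    · exact ⟨hx, by simpa using hxs⟩
    · refine ⟨P.snd_mem_support_of_mem_edges hxe, ?_⟩
      simp only [Set.mem_insert_iff, Set.mem_singleton_iff, not_or]
      exact ⟨fun h => hfx (h ▸ hs), fun h => hfx (h ▸ ht)⟩
  refine ⟨invM f, s1, t1, s2, t2, P1, P2, ⟨invM_pm hf ha, hnd, hco, hP1, hP2,
    alt P1 hs1 ht1 hi1, alt P2 hs2 ht2 hi2, hdis, fun x hx h1 h2 => (hi1 x hx h1 h2).1,
    fun x hx h1 h2 => (hi2 x hx h1 h2).1⟩, invM f, invM_pm hf ha, ?_⟩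
  intro v hv
  refine ⟨s(v, f v), ⟨⟨v, rfl⟩, ?_, by simp⟩, fun e he => invM_eq hf he.1 he.2.2⟩
  simp only [Set.mem_union, Set.mem_ofPred_eq] at hv ⊢
  by_cases hvC : v ∈ C.support
  · exact Or.inl (Or.inl (hC v hvC))
  rcases hv with (hv | hv) | hv
  · exact absurd hv hvC
  · exact Or.inl (Or.inr (hi1 v hv (fun h => hvC (h ▸ hs1)) (fun h => hvC (h ▸ ht1))).2)
  · exact Or.inr (hi2 v hv (fun h => hvC (h ▸ hs2)) (fun h => hvC (h ▸ ht2))).2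

theorem okF_sound {F L : List (ZMod 14)} (h : okF F L = true) :
    (∀ v, partner (partner v F) F = v) ∧ (∀ v, heawood.Adj v (partner v F)) ∧
      ∀ v ∈ L, inf2 v (partner v F) L = true := by
  simp only [okF, Bool.and_eq_true, List.all_eq_true, memb_iff, eqb_iff] at h
  exact ⟨fun v => (h.1 v (mem_allV v)).2, fun v => (adj_iff _ _).2 (h.1 v (mem_allV v)).1, h.2⟩

theorem hall_sound {c : ZMod 14} (C : heawood.Walk c c) (L : List (ZMod 14))
    (hL : ∀ x, x ∈ L ↔ x ∈ C.support) (h : hallCase L = true) :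
    ¬ ConformalCycle heawood C := by
  rintro ⟨M, hM1, hM2, hM3⟩
  simp only [hallCase, List.any_eq_true, Bool.and_eq_true, Bool.not_eq_true', List.all_eq_true,
    Bool.or_eq_true, memb_iff, eqb_iff, Bool.eq_false_iff, ne_eq, hL] at h
  obtain ⟨z, -, hz, u, -, ⟨hu, hun⟩, v, -, ⟨hv, huv⟩, hvn⟩ := h
  have key : ∀ u, u ∉ C.support → (∀ a ∈ nb u, a = z ∨ a ∈ C.support) → s(u, z) ∈ M := by
    intro u hu hun
    obtain ⟨e, ⟨heM, hue⟩, -⟩ := hM3 u ⟨Set.mem_univ _, hu⟩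
    obtain ⟨w, rfl⟩ := Sym2.mem_iff_exists.1 hue
    have hadj : heawood.Adj u w := hM1 _ heM
    have hw := hM2 _ heM w (by simp)
    rcases hun w ((adj_iff _ _).1 hadj) with rfl | hwC
    · exact heM
    · exact absurd hwC hw.2
  obtain ⟨e, -, he⟩ := hM3 z ⟨Set.mem_univ _, hz⟩
  have h1 := he _ ⟨key u hu hun, by simp⟩
  have h2 := he _ ⟨key v hv hvn, by simp⟩
  have h3 : s(u, z) = s(v, z) := h1.trans h2.symm
  rw [Sym2.eq_iff] at h3
  rcases h3 with h3 | h3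
  · exact huv h3.1
  · exact huv (h3.1.trans h3.2)

theorem cross_of_rotate {c d : ZMod 14} (C : heawood.Walk c c) (hd : d ∈ C.support)
    (h : HasConformalCross heawood (C.rotate d hd)) : HasConformalCross heawood C := by
  have hrot := C.support_rotate d hd
  have hsup : ∀ x, x ∈ (C.rotate d hd).support ↔ x ∈ C.support := fun x => by simp
  have hed : ∀ e, e ∈ (C.rotate d hd).edges ↔ e ∈ C.edges := fun e => (C.rotate_edges d hd).mem_iff
  obtain ⟨M, s1, t1, s2, t2, P1, P2, ⟨h1, h2, h3, h4, h5, h6, h7, h8, h9, h10⟩, N, hN, hN'⟩ := h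
  simp only [hsup, hed] at h9 h10 hN'
  refine ⟨M, s1, t1, s2, t2, P1, P2, ⟨h1, h2, ?_, h4, h5, h6, h7, h8, h9, h10⟩, N, hN, hN'⟩
  obtain ⟨n, hn | hn⟩ := h3
  · obtain ⟨k, hk⟩ := hrot.symm
    rw [← hk, List.rotate_rotate] at hn
    exact ⟨_, Or.inl hn⟩
  · obtain ⟨k, hk⟩ := hrot.symm.reverse
    rw [← hk, List.rotate_rotate] at hn
    exact ⟨_, Or.inr hn⟩

theorem leaf_sound {c : ZMod 14} (C : heawood.Walk c c) {v : ZMod 14} (q : heawood.Walk c v)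
    (hq : q.IsPath) (hconf : ConformalCycle heawood C) (h3 : 3 ≤ q.support.length)
    (htail : C.support.tail.reverse = q.support) (hed : ∀ e ∈ q.edges, e ∈ C.edges)
    (h : leafCheck q.support = true) : HasConformalCross heawood C := by
  have hL : ∀ x, x ∈ q.support ↔ x ∈ C.support := by
    intro x
    rw [← htail, List.mem_reverse]
    refine ⟨List.mem_of_mem_tail, fun hx => ?_⟩
    rw [← C.cons_tail_support, List.mem_cons] at hx
    rcases hx with rfl | hx
    · rw [← List.mem_reverse, htail]
      exact q.start_mem_support
    · exact hx
  have hnodup := hq.support_nodup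
  have ford : ∀ s1 s2 t1 t2, sub4 s1 s2 t1 t2 q.support = true →
      [s1, s2, t1, t2].Nodup ∧ InCyclicOrder heawood C s1 s2 t1 t2 ∧
      s1 ∈ C.support ∧ s2 ∈ C.support ∧ t1 ∈ C.support ∧ t2 ∈ C.support := by
    intro s1 s2 t1 t2 hs
    have hs' := subl_sound _ _ hs
    refine ⟨hs'.nodup hnodup, ⟨0, Or.inr (by simpa [htail] using hs')⟩, ?_, ?_, ?_, ?_⟩ <;>
    · rw [← hL]
      exact hs'.subset (by simp)
  have fok : ∀ F, okF F q.support = true → (∀ v, partner (partner v F) F = v) ∧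
      (∀ v, heawood.Adj v (partner v F)) ∧ ∀ v ∈ C.support, s(v, partner v F) ∈ C.edges := by
    intro F hF
    obtain ⟨h1, h2, h3⟩ := okF_sound hF
    exact ⟨h1, h2, fun v hv => hed _ (inf2_sound q (h3 v ((hL v).2 hv)))⟩
  have hchord : chordCase q.support = true → HasConformalCross heawood C := by
    intro h
    simp only [chordCase, List.any_eq_true, Bool.and_eq_true] at h
    obtain ⟨⟨R, -, hR⟩, s1, -, t1, ht1, -, s2, -, t2, ht2, hsub⟩ := h
    obtain ⟨f1, f2, f3⟩ := fok _ hR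
    obtain ⟨o1, o2, o3, o4, o5, o6⟩ := ford _ _ _ _ hsub
    have a1 := (adj_iff _ _).2 ht1
    have a2 := (adj_iff _ _).2 ht2
    have o1' := o1
    simp only [List.nodup_cons, List.mem_cons, List.not_mem_nil, or_false, not_or] at o1'
    refine cross_of C _ f1 f2 f3 a1.toWalk a2.toWalk (by simp [a1.ne]) (by simp [a2.ne])
      o1 o2 o3 o4 o5 o6 ?_ ?_ ?_
    · intro x hx
      simp only [Adj.toWalk, Walk.support_cons, Walk.support_nil, List.mem_cons,
        List.not_mem_nil, or_false] at hx ⊢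
      grind
    · intro x hx n1 n2
      simp [n1, n2] at hx
    · intro x hx n1 n2
      simp [n1, n2] at hx
  have hquad : quadCase q.support = true → HasConformalCross heawood C := by
    intro h
    simp only [quadCase, List.any_eq_true, Bool.and_eq_true, Bool.not_eq_true',
      Bool.eq_false_iff, ne_eq, memb_iff, eqb_iff] at h
    obtain ⟨s1, -, x, hx, hxL, y, hy, hyL, t1, ht1, -, s2, -, z, hz, ⟨hzL, hz'⟩, w, hw,
      ⟨hwL, hw'⟩, t2, ht2, hsub, R, -, ⟨hR, fx⟩, fz⟩ := h
    obtain ⟨f1, f2, f3⟩ := fok _ hR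
    obtain ⟨o1, o2, o3, o4, o5, o6⟩ := ford _ _ _ _ hsub
    rw [← adj_iff] at hx hy ht1 hz hw ht2
    rw [hL] at hxL hyL hzL hwL
    generalize q.support ++ x :: y :: z :: w :: R = F at *
    have fy : partner y F = x := by rw [← fx, f1]
    have fw : partner w F = z := by rw [← fz, f1]
    have o1' := o1
    have e1 := hx.ne
    have e2 := hy.ne
    have e3 := ht1.ne
    have e4 := hz.ne
    have e5 := hw.ne
    have e6 := ht2.ne
    simp only [List.nodup_cons, List.mem_cons, List.not_mem_nil, or_false, not_or] at o1' hz' hw'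
    refine cross_of C _ f1 f2 f3 (.cons hx (.cons hy (.cons ht1 .nil)))
      (.cons hz (.cons hw (.cons ht2 .nil))) ?_ ?_ o1 o2 o3 o4 o5 o6 ?_ ?_ ?_
    · simp only [Walk.isPath_def, Walk.support_cons, Walk.support_nil, List.nodup_cons,
        List.mem_cons, List.not_mem_nil, or_false, not_or]
      grind
    · simp only [Walk.isPath_def, Walk.support_cons, Walk.support_nil, List.nodup_cons,
        List.mem_cons, List.not_mem_nil, or_false, not_or]
      grind
    · intro a ha
      simp only [Walk.support_cons, Walk.support_nil, List.mem_cons,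
        List.not_mem_nil, or_false] at ha ⊢
      grind
    · intro a ha n1 n2
      simp only [Walk.support_cons, Walk.support_nil, List.mem_cons,
        List.not_mem_nil, or_false, n1, n2, false_or] at ha
      rcases ha with rfl | rfl
      · exact ⟨hxL, by simp [fx]⟩
      · exact ⟨hyL, by simp [fy, Sym2.eq_swap]⟩
    · intro a ha n1 n2
      simp only [Walk.support_cons, Walk.support_nil, List.mem_cons,
        List.not_mem_nil, or_false, n1, n2, false_or] at ha
      rcases ha with rfl | rfl
      · exact ⟨hzL, by simp [fz]⟩
      · exact ⟨hwL, by simp [fw, Sym2.eq_swap]⟩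
  unfold leafCheck at h
  split at h
  · omega
  · exact hquad h
  · exact absurd hconf (hall_sound C _ hL h)
  · exact absurd hconf (hall_sound C _ hL h)
  · exact hchord h

theorem cross_min {c : ZMod 14} (C : heawood.Walk c c) (hC : C.IsCycle)
    (hconf : ConformalCycle heawood C)
    (hmin : ∀ x ∈ C.support, Fin.val (n := 14) c ≤ Fin.val (n := 14) x) :
    HasConformalCross heawood C := by
  have hlen := hC.three_le_length
  cases C with
  | nil => simp at hlen
  | @cons _ v _ hcv p =>
    have hp : p.IsPath := ((Walk.cons_isCycle_iff _ _).1 hC).1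
    have hd := List.all_eq_true.1 (List.all_eq_true.1 dfs_all c (mem_allV c)) v
      ((adj_iff _ _).1 hcv)
    have hleaf := dfs_sound c 15 [] v hd p hp (fun x hx => by
      have := hmin x (by simp [hx])
      rw [Nat.blt_eq]
      omega) (by simp)
    refine leaf_sound _ p.reverse hp.reverse hconf ?_ ?_ ?_ ?_
    · simpa using hlen
    · simp
    · intro e he
      simp only [Walk.edges_reverse, List.mem_reverse] at he
      simp [he]
    · simpa using hleaf

/-- every conformal cycle of the Heawood graph has a conformal cross. -/
theorem statement_6 {c : ZMod 14} (C : heawood.Walk c c) (hC : C.IsCycle)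
    (hconf : ConformalCycle heawood C) :
    HasConformalCross heawood C := by
  obtain ⟨d, hd, hmin⟩ := (C.support.toFinset).exists_min_image (fun x => Fin.val (n := 14) x)
    ⟨c, by simp⟩
  simp only [List.mem_toFinset] at hd hmin
  have hsup : ∀ x, x ∈ (C.rotate d hd).support ↔ x ∈ C.support := fun x => by simp
  refine cross_of_rotate C hd (cross_min _ (hC.rotate hd) ?_ ?_)
  · unfold ConformalCycle ConformalCycleOn at hconf ⊢
    simpa only [hsup] using hconf
  · intro x hx
    exact hmin x ((hsup x).1 hx)

end Paper
end

section
/- Let B be a bipartite graph with a perfect matching, let a1, a2 ∈ V1 and b1, b2 ∈ V2 be four distinct vertices, S = {a1, a2, b1, b2}, and let F = {a1b2, a2b1} ⊆ E(B) be an extendible S-cover. Let B⁺ be the graph obtained from B by adding two new vertices x and y (with x placed in V1 and y in V2) together with the edges xy, xb1, xb2, ya1, ya2, and let C be the 4-cycle of B⁺ with vertices a1, y, x, b2 (edges a1y, yx, xb2, b2a1). Then B is an F-instance of 2-MLP for (a1, a2) and (b1, b2) if and only if there exists a conformal cross over C in B⁺. -/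
namespace Paper

open SimpleGraph

variable {V : Type*} {W : Type*}

theorem pm_unique {V : Type*} {G : SimpleGraph V} {N : Set (Sym2 V)} (hN : IsPMOn G Set.univ N)
    {x : V} {e f : Sym2 V} (he : e ∈ N) (hf : f ∈ N) (hxe : x ∈ e) (hxf : x ∈ f) : e = f :=
  (hN.2.2 x trivial).unique ⟨he, hxe⟩ ⟨hf, hxf⟩

theorem mem_supp {V : Type*} {G : SimpleGraph V} {u v : V} (P : G.Walk u v) {e : Sym2 V}
    (he : e ∈ P.edges) {y : V} (hy : y ∈ e) : y ∈ P.support := by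
  induction e using Sym2.ind with
  | _ p q =>
    rcases Sym2.mem_iff.1 hy with rfl | rfl
    · exact P.fst_mem_support_of_mem_edges he
    · exact P.snd_mem_support_of_mem_edges he

/-- canonical matching of the internal vertices of an odd path -/
theorem internal_matching {V : Type*} {G : SimpleGraph V} (n : ℕ) : ∀ {u v : V} (P : G.Walk u v),
    P.length ≤ n → P.IsPath → Odd P.length →
    ∃ L : Set (Sym2 V), (∀ e ∈ L, e ∈ P.edges ∧ ∀ y ∈ e, y ≠ u ∧ y ≠ v) ∧
      ∀ x ∈ P.support, x ≠ u → x ≠ v → ∃! e, e ∈ L ∧ x ∈ e := by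
  induction n using Nat.strong_induction_on with
  | _ n ih =>
  intro u v P hn hP hodd
  match P, hn, hP, hodd with
  | .nil, _, _, hodd => simp at hodd
  | .cons h .nil, _, _, _ =>
    refine ⟨∅, by simp, ?_⟩
    intro x hx h1 h2
    simp at hx
    tauto
  | .cons (v := w) h (.cons (v := w') h' p), hn, hP, hodd =>
    simp only [Walk.length_cons] at hn hodd
    have hodd' : Odd p.length := by
      rcases hodd with ⟨k, hk⟩
      exact ⟨k - 1, by omega⟩
    simp only [Walk.cons_isPath_iff, Walk.support_cons, List.mem_cons, not_or] at hP
    obtain ⟨⟨hp, hw⟩, huw, hu⟩ := hP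
    obtain ⟨L, hL1, hL2⟩ := ih p.length (by omega) p le_rfl hp hodd'
    have hwv : w' ≠ v := by
      rintro rfl
      have := Walk.isPath_iff_eq_nil.1 hp
      subst this
      simp at hodd'
    have hvs : v ∈ p.support := p.end_mem_support
    have hws : w' ∈ p.support := p.start_mem_support
    refine ⟨insert s(w, w') L, ?_, ?_⟩
    · intro e he
      rcases he with rfl | he
      · refine ⟨by simp, ?_⟩
        intro y hy
        rcases Sym2.mem_iff.1 hy with rfl | rfl
        · exact ⟨fun h => huw h.symm, fun h => hw (h ▸ hvs)⟩
        · exact ⟨fun h => hu (h ▸ hws), hwv⟩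
      · refine ⟨by simp [(hL1 e he).1], fun y hy => ⟨?_, ((hL1 e he).2 y hy).2⟩⟩
        rintro rfl
        exact hu (mem_supp p (hL1 e he).1 hy)
    · intro x hx hxu hxv
      simp only [Walk.support_cons, List.mem_cons, hxu, false_or] at hx
      by_cases hxw : x = w ∨ x = w'
      · refine ⟨s(w, w'), ⟨by simp, by simpa using hxw⟩, ?_⟩
        rintro e ⟨rfl | he, hxe⟩
        · rfl
        · exfalso
          rcases hxw with rfl | rfl
          · exact hw (mem_supp p (hL1 e he).1 hxe)
          · exact ((hL1 e he).2 _ hxe).1 rfl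
      · push Not at hxw
        have hxp : x ∈ p.support := by tauto
        obtain ⟨e, ⟨he, hxe⟩, hu⟩ := hL2 x hxp hxw.2 hxv
        refine ⟨e, ⟨Or.inr he, hxe⟩, ?_⟩
        rintro f ⟨rfl | hf, hxf⟩
        · simp at hxf; tauto
        · exact hu f ⟨hf, hxf⟩

theorem odd_of_bip {V : Type*} {G : SimpleGraph V} {V1 V2 : Set V}
    (hbip : IsBipartitionOf G V1 V2) {u v : V} (P : G.Walk u v) :
    (u ∈ V1 ↔ v ∈ V2) ↔ Odd P.length := by
  obtain ⟨hd, hu, hadj⟩ := hbip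
  have key : ∀ z, z ∈ V2 ↔ z ∉ V1 := by
    intro z
    have h1 : z ∈ V1 ∪ V2 := hu ▸ trivial
    constructor
    · intro h2 h3; exact (Set.disjoint_left.1 hd) h3 h2
    · intro h; exact h1.resolve_left h
  induction P with
  | nil => simp [key]
  | @cons u w v h p ih =>
    have := hadj h
    rw [key] at this ⊢
    rw [key v] at ih
    rw [Walk.length_cons, Nat.odd_add_one]
    have ih' := ih
    tauto

section
variable {V : Type*} (B : SimpleGraph V) (a1 a2 b1 b2 : V)

theorem adj_inl_inl (u v : V) :
    (plusXY B a1 a2 b1 b2).Adj (Sum.inl u) (Sum.inl v) ↔ B.Adj u v := by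
  simp only [plusXY, fromRel_adj]
  constructor
  · rintro ⟨-, h⟩
    simp at h
    exact h.elim id (·.symm)
  · intro h
    exact ⟨by simpa using h.ne, Or.inl (Or.inl ⟨u, v, rfl, rfl, h⟩)⟩

theorem adj_inl_zero (u : V) :
    (plusXY B a1 a2 b1 b2).Adj (Sum.inl u) (Sum.inr 0) ↔ u = b1 ∨ u = b2 := by
  simp [plusXY, fromRel_adj]

theorem adj_inl_one (u : V) :
    (plusXY B a1 a2 b1 b2).Adj (Sum.inl u) (Sum.inr 1) ↔ u = a1 ∨ u = a2 := by
  simp [plusXY, fromRel_adj]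

theorem adj_one_zero :
    (plusXY B a1 a2 b1 b2).Adj (Sum.inr 1) (Sum.inr 0) := by
  simp [plusXY, fromRel_adj]

/-- the inclusion -/
def inlHom : B →g plusXY B a1 a2 b1 b2 where
  toFun := Sum.inl
  map_rel' h := (adj_inl_inl B a1 a2 b1 b2 _ _).2 h

/-- the image of a walk -/
def emb {u v : V} (P : B.Walk u v) : (plusXY B a1 a2 b1 b2).Walk (Sum.inl u) (Sum.inl v) :=
  P.map (inlHom B a1 a2 b1 b2)

theorem emb_support {u v : V} (P : B.Walk u v) :
    (emb B a1 a2 b1 b2 P).support = P.support.map Sum.inl :=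
  Walk.support_map _ _

theorem emb_edges {u v : V} (P : B.Walk u v) :
    (emb B a1 a2 b1 b2 P).edges = P.edges.map (Sym2.map Sum.inl) :=
  Walk.edges_map _ _

theorem emb_isPath {u v : V} (P : B.Walk u v) : (emb B a1 a2 b1 b2 P).IsPath ↔ P.IsPath :=
  Walk.map_isPath_iff_of_injective (f := inlHom B a1 a2 b1 b2) Sum.inl_injective

theorem emb_cons {u v w : V} (h : B.Adj u v) (P : B.Walk v w) :
    emb B a1 a2 b1 b2 (.cons h P) =
      .cons ((adj_inl_inl B a1 a2 b1 b2 _ _).2 h) (emb B a1 a2 b1 b2 P) := rfl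

theorem lift_walk {p q : V ⊕ Fin 2} (P : (plusXY B a1 a2 b1 b2).Walk p q) :
    ∀ (u v : V) (hp : p = Sum.inl u) (hq : q = Sum.inl v)
    (_ : ∀ z ∈ P.support, z ≠ Sum.inr 0 ∧ z ≠ Sum.inr 1),
    ∃ P' : B.Walk u v, emb B a1 a2 b1 b2 P' = P.copy hp hq := by
  induction P with
  | nil =>
    rintro u v rfl hq _
    cases hq
    exact ⟨.nil, rfl⟩
  | @cons p w q h P ih =>
    rintro u v rfl rfl hs
    simp only [Walk.support_cons, List.mem_cons, forall_eq_or_imp] at hs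
    have hw := hs.2 w P.start_mem_support
    rcases w with w | i
    · obtain ⟨P', hP'⟩ := ih w v rfl rfl hs.2
      refine ⟨.cons ((adj_inl_inl B a1 a2 b1 b2 _ _).1 h) P', ?_⟩
      rw [emb_cons, hP']
      rfl
    · fin_cases i <;> simp at hw

end

theorem exists_lift {V : Type*} (B : SimpleGraph V) (a1 a2 b1 b2 : V) (s t : V) (i : Fin 2)
    (P : (plusXY B a1 a2 b1 b2).Walk (Sum.inl s) (Sum.inr i)) (hP : P.IsPath)
    (hnadj : ¬ (plusXY B a1 a2 b1 b2).Adj (Sum.inl s) (Sum.inr i))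
    (hint : ∀ z ∈ P.support, z ≠ Sum.inl s → z ≠ Sum.inr i → z ≠ Sum.inr 0 ∧ z ≠ Sum.inr 1 ∧
      ((plusXY B a1 a2 b1 b2).Adj z (Sum.inr i) → z = Sum.inl t)) :
    ∃ (P' : B.Walk s t) (h : (plusXY B a1 a2 b1 b2).Adj (Sum.inl t) (Sum.inr i)), P'.IsPath ∧
      P = (emb B a1 a2 b1 b2 P').concat h := by
  obtain ⟨w, P0, h, rfl⟩ : ∃ (w : _) (P0 : (plusXY B a1 a2 b1 b2).Walk (Sum.inl s) w)
      (h : (plusXY B a1 a2 b1 b2).Adj w (Sum.inr i)), P = P0.concat h := by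
    cases P with
    | cons h p =>
      obtain ⟨w, q, h', e⟩ := Walk.exists_cons_eq_concat h p
      exact ⟨w, q, h', e⟩
  rw [Walk.concat_isPath_iff] at hP
  have hw : w = Sum.inl t := by
    refine (hint w (by simp [Walk.support_concat]) ?_ h.ne).2.2 h
    rintro rfl
    exact hnadj h
  subst hw
  obtain ⟨P', hP'⟩ := lift_walk B a1 a2 b1 b2 P0 s t rfl rfl (by
    intro z hz
    by_cases hzs : z = Sum.inl s
    · subst hzs; simp
    · have := hint z (by simp [Walk.support_concat, hz]) hzs (by
        rintro rfl; exact hP.2 hz)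
      exact ⟨this.1, this.2.1⟩)
  simp only [Walk.copy_rfl_rfl] at hP'
  subst hP'
  refine ⟨P', h, ?_, rfl⟩
  exact (emb_isPath B a1 a2 b1 b2 _).1 hP.1

theorem core_back {V : Type*} (B : SimpleGraph V)
    (V1 V2 : Set V) (hbip : IsBipartitionOf B V1 V2)
    (a1 a2 b1 b2 : V)
    (ha1 : a1 ∈ V1) (ha2 : a2 ∈ V1) (hb1 : b1 ∈ V2) (hb2 : b2 ∈ V2)
    (hdist : [a1, a2, b1, b2].Nodup)
    (hF1 : B.Adj a1 b2) (hF2 : B.Adj a2 b1)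
    (P1 : (plusXY B a1 a2 b1 b2).Walk (Sum.inl a1) (Sum.inr 0))
    (P2 : (plusXY B a1 a2 b1 b2).Walk (Sum.inl b2) (Sum.inr 1))
    (hP1 : P1.IsPath) (hP2 : P2.IsPath)
    (hdisj : ∀ x, x ∈ P1.support → x ∉ P2.support)
    (N : Set (Sym2 (V ⊕ Fin 2))) (hN : IsPMOn (plusXY B a1 a2 b1 b2) Set.univ N)
    (Es : Set (Sym2 (V ⊕ Fin 2)))
    (hEs : Es = {s(Sum.inl a1, Sum.inr 1), s(Sum.inr 1, Sum.inr 0), s(Sum.inr 0, Sum.inl b2),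
            s(Sum.inl b2, Sum.inl a1)})
    (hint1 : ∀ x ∈ P1.support, x ≠ Sum.inl a1 → x ≠ Sum.inr 0 →
      x ≠ Sum.inl b2 ∧ x ≠ Sum.inr 1)
    (hint2 : ∀ x ∈ P2.support, x ≠ Sum.inl b2 → x ≠ Sum.inr 1 →
      x ≠ Sum.inl a1 ∧ x ≠ Sum.inr 0)
    (hM : ∀ x, x ∈ P1.support ∨ x ∈ P2.support →
      ∃ e ∈ N, (e ∈ Es ∨ e ∈ P1.edges ∨ e ∈ P2.edges) ∧ x ∈ e) :
    TwoMLPInstanceOn B Set.univ a1 a2 b1 b2 {s(a1, b2), s(a2, b1)} := by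
  simp only [List.nodup_cons, List.mem_cons, List.not_mem_nil, or_false, not_or,
    not_false_eq_true, List.nodup_nil, and_true] at hdist
  obtain ⟨⟨h12, h1b1, h1b2⟩, ⟨h2b1, h2b2⟩, hbb⟩ := hdist
  obtain ⟨P, hx, hPp, rfl⟩ := exists_lift B a1 a2 b1 b2 a1 b1 0 P1 hP1
    (by rw [adj_inl_zero]; tauto) (by
      intro z hz h1 h2
      have := hint1 z hz h1 h2
      refine ⟨h2, this.2, ?_⟩
      rcases z with z | i
      · rw [adj_inl_zero]
        simp at this
        rintro (rfl | rfl)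
        · rfl
        · exact absurd rfl this
      · fin_cases i
        · exact absurd rfl h2
        · exact absurd rfl this.2)
  obtain ⟨Q, hy, hQp, rfl⟩ := exists_lift B a1 a2 b1 b2 b2 a2 1 P2 hP2
    (by rw [adj_inl_one]; rintro (h | h) <;> simp_all) (by
      intro z hz h1 h2
      have := hint2 z hz h1 h2
      refine ⟨this.2, h2, ?_⟩
      rcases z with z | i
      · rw [adj_inl_one]
        simp at this
        rintro (rfl | rfl)
        · exact absurd rfl this
        · rfl
      · fin_cases i
        · exact absurd rfl this.2
        · exact absurd rfl h2)
  have hsP : ∀ v, v ∈ P.support →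
      Sum.inl v ∈ ((emb B a1 a2 b1 b2 P).concat hx).support := by
    intro v hv
    simp only [Walk.support_concat, emb_support, List.concat_eq_append, List.mem_append]
    exact Or.inl (List.mem_map.2 ⟨v, hv, rfl⟩)
  have hsQ : ∀ v, v ∈ Q.support →
      Sum.inl v ∈ ((emb B a1 a2 b1 b2 Q).concat hy).support := by
    intro v hv
    simp only [Walk.support_concat, emb_support, List.concat_eq_append, List.mem_append]
    exact Or.inl (List.mem_map.2 ⟨v, hv, rfl⟩)
  have hsP' : ∀ v, Sum.inl v ∈ ((emb B a1 a2 b1 b2 P).concat hx).support →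
      v ∈ P.support := by
    intro v hv
    simp only [Walk.support_concat, emb_support, List.concat_eq_append, List.mem_append,
      List.mem_map] at hv
    simpa using hv
  have hsQ' : ∀ v, Sum.inl v ∈ ((emb B a1 a2 b1 b2 Q).concat hy).support →
      v ∈ Q.support := by
    intro v hv
    simp only [Walk.support_concat, emb_support, List.concat_eq_append, List.mem_append,
      List.mem_map] at hv
    simpa using hv
  have hPQ : ∀ v, v ∈ P.support → v ∉ Q.support := fun v h1 h2 => hdisj _ (hsP v h1) (hsQ v h2)
  have hoP : Odd P.length := (odd_of_bip hbip P).1 (by tauto)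
  have key : ∀ z, z ∈ V1 → z ∉ V2 := fun z h => Set.disjoint_left.1 hbip.1 h
  have key2 : ∀ z, z ∈ V2 → z ∉ V1 := fun z h => Set.disjoint_right.1 hbip.1 h
  have hoQ : Odd Q.length := (odd_of_bip hbip Q).1
    ⟨fun h => absurd h (key2 _ hb2), fun h => absurd h (key _ ha2)⟩
  obtain ⟨L1, hL1, hL1'⟩ := internal_matching _ P le_rfl hPp hoP
  obtain ⟨L2, hL2, hL2'⟩ := internal_matching _ Q le_rfl hQp hoQ
  have a1P := P.start_mem_support
  have b1P := P.end_mem_support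
  have b2Q := Q.start_mem_support
  have a2Q := Q.end_mem_support
  -- if an `N`-edge touches the subgraph then all of its endpoints do
  have hclosed : ∀ e ∈ N, ∀ z ∈ e,
      (z ∈ ((emb B a1 a2 b1 b2 P).concat hx).support ∨
        z ∈ ((emb B a1 a2 b1 b2 Q).concat hy).support) →
      ∀ v, Sum.inl v ∈ e → v ∈ P.support ∨ v ∈ Q.support := by
    intro e he z hz hzs v hv
    obtain ⟨f, hf, hfE, hzf⟩ := hM z hzs
    obtain rfl := pm_unique hN he hf hz hzf
    rcases hfE with h | h | h
    · rw [hEs] at h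
      simp only [Set.mem_insert_iff, Set.mem_singleton_iff] at h
      rcases h with rfl | rfl | rfl | rfl <;> simp at hv
      · subst hv; exact Or.inl a1P
      · subst hv; exact Or.inr b2Q
      · rcases hv with rfl | rfl
        · exact Or.inr b2Q
        · exact Or.inl a1P
    · exact Or.inl (hsP' _ (mem_supp _ h hv))
    · exact Or.inr (hsQ' _ (mem_supp _ h hv))
  let M0 : Set (Sym2 V) := {e | Sym2.map Sum.inl e ∈ N ∧ ∀ v ∈ e, v ∉ P.support ∧ v ∉ Q.support}
  let M : Set (Sym2 V) := M0 ∪ L1 ∪ L2 ∪ {s(a1, b2), s(a2, b1)}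
  have hMmem : ∀ e, e ∈ M ↔ (((e ∈ M0 ∨ e ∈ L1) ∨ e ∈ L2) ∨ (e = s(a1, b2) ∨ e = s(a2, b1))) :=
    fun e => Iff.rfl
  -- facts per piece
  have f0 : ∀ e ∈ M0, ∀ v ∈ e, v ∉ P.support ∧ v ∉ Q.support := fun e he => he.2
  have f1 : ∀ e ∈ L1, ∀ v ∈ e, v ∈ P.support ∧ v ≠ a1 ∧ v ≠ b1 :=
    fun e he v hv => ⟨mem_supp P (hL1 e he).1 hv, (hL1 e he).2 v hv⟩
  have f2 : ∀ e ∈ L2, ∀ v ∈ e, v ∈ Q.support ∧ v ≠ b2 ∧ v ≠ a2 :=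
    fun e he v hv => ⟨mem_supp Q (hL2 e he).1 hv, (hL2 e he).2 v hv⟩
  have uniqP : ∀ v ∈ P.support, v ≠ a1 → v ≠ b1 → ∀ e ∈ M, v ∈ e → e ∈ L1 := by
    intro v hv h1 h2 e he hve
    rcases (hMmem e).1 he with ((he | he) | he) | (rfl | rfl)
    · exact absurd hv (f0 e he v hve).1
    · exact he
    · exact absurd (f2 e he v hve).1 (hPQ v hv)
    · rcases Sym2.mem_iff.1 hve with rfl | rfl
      · exact absurd rfl h1
      · exact absurd b2Q (hPQ _ hv)
    · rcases Sym2.mem_iff.1 hve with rfl | rfl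
      · exact absurd a2Q (hPQ _ hv)
      · exact absurd rfl h2
  have uniqQ : ∀ v ∈ Q.support, v ≠ b2 → v ≠ a2 → ∀ e ∈ M, v ∈ e → e ∈ L2 := by
    intro v hv h1 h2 e he hve
    rcases (hMmem e).1 he with ((he | he) | he) | (rfl | rfl)
    · exact absurd hv (f0 e he v hve).2
    · exact absurd hv (hPQ v (f1 e he v hve).1)
    · exact he
    · rcases Sym2.mem_iff.1 hve with rfl | rfl
      · exact absurd hv (hPQ _ a1P)
      · exact absurd rfl h1
    · rcases Sym2.mem_iff.1 hve with rfl | rfl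
      · exact absurd rfl h2
      · exact absurd hv (hPQ _ b1P)
  have hPM : IsPMOn B Set.univ M := by
    refine ⟨?_, fun _ _ _ _ => trivial, ?_⟩
    · intro e he
      rcases (hMmem e).1 he with ((he | he) | he) | (rfl | rfl)
      · have := hN.1 _ he.1
        induction e using Sym2.ind with
        | _ p q =>
          rw [Sym2.map_mk, mem_edgeSet, adj_inl_inl] at this
          exact this
      · exact P.edges_subset_edgeSet (hL1 e he).1
      · exact Q.edges_subset_edgeSet (hL2 e he).1
      · exact hF1
      · exact hF2
    · intro v _
      by_cases hvF1 : v = a1 ∨ v = b2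
      · refine ⟨s(a1, b2), ⟨by simp [hMmem], by simpa using hvF1⟩, ?_⟩
        rintro e ⟨he, hve⟩
        have hv' : v ∈ P.support ∨ v ∈ Q.support := by
          rcases hvF1 with rfl | rfl <;> tauto
        rcases (hMmem e).1 he with ((he | he) | he) | (rfl | rfl)
        · have := f0 e he v hve; tauto
        · exfalso
          have := f1 e he v hve
          rcases hvF1 with rfl | rfl
          · exact this.2.1 rfl
          · exact hPQ _ this.1 b2Q
        · exfalso
          have := f2 e he v hve
          rcases hvF1 with rfl | rfl
          · exact hPQ _ a1P this.1
          · exact this.2.1 rfl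
        · rfl
        · exfalso
          rcases hvF1 with rfl | rfl <;> rcases Sym2.mem_iff.1 hve with h | h
          · exact h12 h
          · exact h1b1 h
          · exact h2b2 h.symm
          · exact hbb h.symm
      by_cases hvF2 : v = a2 ∨ v = b1
      · refine ⟨s(a2, b1), ⟨by simp [hMmem], by simpa using hvF2⟩, ?_⟩
        rintro e ⟨he, hve⟩
        have hv' : v ∈ P.support ∨ v ∈ Q.support := by
          rcases hvF2 with rfl | rfl <;> tauto
        rcases (hMmem e).1 he with ((he | he) | he) | (rfl | rfl)
        · have := f0 e he v hve; tauto
        · exfalso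
          have := f1 e he v hve
          rcases hvF2 with rfl | rfl
          · exact hPQ _ this.1 a2Q
          · exact this.2.2 rfl
        · exfalso
          have := f2 e he v hve
          rcases hvF2 with rfl | rfl
          · exact this.2.2 rfl
          · exact hPQ _ b1P this.1
        · exact absurd (by simpa using hve) hvF1
        · rfl
      push Not at hvF1 hvF2
      by_cases hvP : v ∈ P.support
      · obtain ⟨e, ⟨he, hve⟩, hu⟩ := hL1' v hvP hvF1.1 hvF2.2
        refine ⟨e, ⟨by simp [hMmem, he], hve⟩, ?_⟩
        rintro f ⟨hf, hvf⟩
        exact hu f ⟨uniqP v hvP hvF1.1 hvF2.2 f hf hvf, hvf⟩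
      by_cases hvQ : v ∈ Q.support
      · obtain ⟨e, ⟨he, hve⟩, hu⟩ := hL2' v hvQ hvF1.2 hvF2.1
        refine ⟨e, ⟨by simp [hMmem, he], hve⟩, ?_⟩
        rintro f ⟨hf, hvf⟩
        exact hu f ⟨uniqQ v hvQ hvF1.2 hvF2.1 f hf hvf, hvf⟩
      obtain ⟨e, ⟨he, hve⟩, hu⟩ := hN.2.2 (Sum.inl v) trivial
      have hoff : ∀ z ∈ e, ¬ (z ∈ ((emb B a1 a2 b1 b2 P).concat hx).support ∨
        z ∈ ((emb B a1 a2 b1 b2 Q).concat hy).support) := by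
        intro z hz h
        have := hclosed e he z hz h v hve
        tauto
      obtain ⟨w, rfl⟩ := Sym2.mem_iff_exists.1 hve
      have hw := hoff w (by simp)
      rcases w with w | i
      · refine ⟨s(v, w), ⟨(hMmem _).2 (Or.inl (Or.inl (Or.inl ⟨he, ?_⟩))), by simp⟩, ?_⟩
        · intro z hz
          have := hoff (Sum.inl z) (by simpa using hz)
          exact ⟨fun h => this (Or.inl (hsP z h)), fun h => this (Or.inr (hsQ z h))⟩
        · rintro f ⟨hf, hvf⟩
          rcases (hMmem f).1 hf with ((hf | hf) | hf) | (rfl | rfl)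
          · have := hu (Sym2.map Sum.inl f) ⟨hf.1, Sym2.mem_map.2 ⟨v, hvf, rfl⟩⟩
            exact Sym2.map.injective Sum.inl_injective this
          · exact absurd (f1 f hf v hvf).1 hvP
          · exact absurd (f2 f hf v hvf).1 hvQ
          · simp at hvf; tauto
          · simp at hvf; tauto
      · exfalso
        apply hw
        fin_cases i
        · left; exact Walk.end_mem_support _
        · right; exact Walk.end_mem_support _
  refine ⟨M, hPM, fun e he => Or.inr he, P, Q.reverse, hPp, hQp.reverse, ?_, ?_, ?_⟩
  · rintro v ⟨hv, h1, h2⟩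
    obtain ⟨e, ⟨he, hve⟩, hu⟩ := hL1' v hv h1 h2
    refine ⟨e, ⟨by simp [hMmem, he], (hL1 e he).1, fun y hy => f1 e he y hy, hve⟩, ?_⟩
    rintro f ⟨hf, _, _, hvf⟩
    exact pm_unique hPM hf (by simp [hMmem, he]) hvf hve
  · rintro v ⟨hv, h1, h2⟩
    simp only [Walk.support_reverse, List.mem_reverse] at hv
    obtain ⟨e, ⟨he, hve⟩, hu⟩ := hL2' v hv h2 h1
    refine ⟨e, ⟨by simp [hMmem, he], by simpa using (hL2 e he).1, fun y hy => ?_, hve⟩, ?_⟩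
    · have := f2 e he y hy
      exact ⟨by simpa using this.1, this.2.2, this.2.1⟩
    rintro f ⟨hf, _, _, hvf⟩
    exact pm_unique hPM hf (by simp [hMmem, he]) hvf hve
  · intro v hv hv'
    exact hPQ v hv (by simpa using hv')

theorem walk_four {V : Type*} {G : SimpleGraph V} {u v : V} (C : G.Walk u v)
    (h : C.length = 4) : ∃ v1 v2 v3, C.support = [u, v1, v2, v3, v] ∧
      C.edges = [s(u, v1), s(v1, v2), s(v2, v3), s(v3, v)] := by
  match C, h with
  | .cons (v := v1) h1 (.cons (v := v2) h2 (.cons (v := v3) h3 (.cons h4 .nil))), _ =>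
    exact ⟨v1, v2, v3, rfl, rfl⟩

/-- shape of the 4-cycle -/
theorem cycle_shape {V : Type*} (B : SimpleGraph V) (a1 a2 b1 b2 : V) (hab : a1 ≠ b2)
    (C : (plusXY B a1 a2 b1 b2).Walk (Sum.inr 1) (Sum.inr 1)) (hC : C.IsCycle)
    (hE : {e | e ∈ C.edges} =
          ({s(Sum.inl a1, Sum.inr 1), s(Sum.inr 1, Sum.inr 0), s(Sum.inr 0, Sum.inl b2),
            s(Sum.inl b2, Sum.inl a1)} : Set (Sym2 (V ⊕ Fin 2)))) :
    C.support.tail = [Sum.inl a1, Sum.inl b2, Sum.inr 0, Sum.inr 1] ∨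
    C.support.tail = [Sum.inr 0, Sum.inl b2, Sum.inl a1, Sum.inr 1] := by
  classical
  have hlen : C.length = 4 := by
    rw [← Walk.length_edges, ← List.toFinset_card_of_nodup hC.edges_nodup]
    have : C.edges.toFinset = ({s(Sum.inl a1, Sum.inr 1), s(Sum.inr 1, Sum.inr 0),
        s(Sum.inr 0, Sum.inl b2), s(Sum.inl b2, Sum.inl a1)} : Finset (Sym2 (V ⊕ Fin 2))) := by
      ext e
      have := Set.ext_iff.1 hE e
      simpa using this
    rw [this]
    have hba : b2 ≠ a1 := hab.symm
    simp [Finset.card_insert_of_notMem, hab, hba]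
  have hmem : ∀ e ∈ C.edges, e ∈ ({s(Sum.inl a1, Sum.inr 1), s(Sum.inr 1, Sum.inr 0),
        s(Sum.inr 0, Sum.inl b2), s(Sum.inl b2, Sum.inl a1)} : Set (Sym2 (V ⊕ Fin 2))) := by
    intro e he
    rw [← hE]; exact he
  have hnd := hC.support_nodup
  clear hE
  obtain ⟨v1, v2, v3, hs4, he4⟩ := walk_four C hlen
  · rw [he4] at hmem
    rw [hs4] at hnd ⊢
    simp only [List.mem_cons, List.not_mem_nil, or_false,
      forall_eq_or_imp, forall_eq, Set.mem_insert_iff, Set.mem_singleton_iff] at hmem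
    simp only [List.tail_cons, List.nodup_cons,
      List.mem_cons, List.not_mem_nil, or_false, not_or] at hnd ⊢
    obtain ⟨m1, m2, m3, m4⟩ := hmem
    have hba : b2 ≠ a1 := hab.symm
    have n1 : v1 = Sum.inl a1 ∨ v1 = Sum.inr 0 := by
      simp [Sym2.eq_iff] at m1; tauto
    have n3 : v3 = Sum.inl a1 ∨ v3 = Sum.inr 0 := by
      simp [Sym2.eq_iff] at m4; tauto
    rcases n1 with rfl | rfl <;> rcases n3 with rfl | rfl
    · simp at hnd
    · left; simp [Sym2.eq_iff, hab, hba] at m2; simp at hnd; simp; tauto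
    · right; simp [Sym2.eq_iff, hab, hba] at m2 m3; simp at hnd; simp; tauto
    · simp at hnd

theorem rot_cases {α : Type*} (p q r s a b c d : α) (n : ℕ)
    (h : List.Sublist [p, q, r, s] ([a, b, c, d].rotate n)) :
    (p = a ∧ q = b ∧ r = c ∧ s = d) ∨ (p = b ∧ q = c ∧ r = d ∧ s = a) ∨
    (p = c ∧ q = d ∧ r = a ∧ s = b) ∨ (p = d ∧ q = a ∧ r = b ∧ s = c) := by
  have h' := h.eq_of_length (by simp)
  rw [← List.rotate_mod] at h'
  have hn : n % [a, b, c, d].length < 4 := Nat.mod_lt _ (by simp)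
  generalize n % [a, b, c, d].length = k at h' hn
  interval_cases k <;> simp at h' <;> tauto

theorem alt_concat {V : Type*} {G : SimpleGraph V} {N : Set (Sym2 V)}
    (hN : IsPMOn G Set.univ N) {u v w : V} (P : G.Walk u v) (h : G.Adj v w)
    (hw : w ∉ P.support) (huv : u ≠ v) (hvw : s(v, w) ∈ N)
    (hint : ∀ x ∈ P.support, x ≠ u → x ≠ v → ∃ e ∈ N, e ∈ P.edges ∧ u ∉ e ∧ x ∈ e) :
    MAlternating G N (P.concat h) ∧
    ∀ x ∈ (P.concat h).support, x ≠ u → ∃ e ∈ N, e ∈ (P.concat h).edges ∧ x ∈ e := by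
  have hwu : w ≠ u := by rintro rfl; exact hw P.start_mem_support
  have key : ∀ x ∈ (P.concat h).support, x ≠ u →
      ∃ e ∈ N, e ∈ (P.concat h).edges ∧ u ∉ e ∧ x ∈ e := by
    intro x hx hxu
    by_cases hxv : x = v ∨ x = w
    · refine ⟨s(v, w), hvw, by simp [Walk.edges_concat], ?_, by simpa using hxv⟩
      simp [huv, hwu.symm]
    · push Not at hxv
      have hxP : x ∈ P.support := by
        simp [Walk.support_concat] at hx; tauto
      obtain ⟨e, he, h1, h2, h3⟩ := hint x hxP hxu hxv.1
      exact ⟨e, he, by simp [Walk.edges_concat, h1], h2, h3⟩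
  refine ⟨⟨{u}, by simp, ?_⟩, fun x hx hxu => ?_⟩
  · rintro x ⟨hx, hxu⟩
    obtain ⟨e, he, h1, h2, h3⟩ := key x hx hxu
    refine ⟨e, ⟨he, h1, fun y hy => ⟨mem_supp _ h1 hy, ?_⟩, h3⟩, ?_⟩
    · rintro rfl; exact h2 hy
    · rintro f ⟨hf, -, -, hxf⟩
      exact pm_unique hN hf he hxf h3
  · obtain ⟨e, he, h1, h2, h3⟩ := key x hx hxu
    exact ⟨e, he, h1, h3⟩

theorem core_fwd {V : Type*} (B : SimpleGraph V) (a1 a2 b1 b2 : V)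
    (hdist : [a1, a2, b1, b2].Nodup) (hF1 : B.Adj a1 b2)
    (M : Set (Sym2 V)) (hM : IsPMOn B Set.univ M)
    (hF : ({s(a1, b2), s(a2, b1)} : Set (Sym2 V)) ⊆ M)
    (P1 : B.Walk a1 b1) (P2 : B.Walk a2 b2) (hP1 : P1.IsPath) (hP2 : P2.IsPath)
    (hc1 : InternallyMConformal B M P1) (hc2 : InternallyMConformal B M P2)
    (hdisj : ∀ x : V, x ∈ P1.support → x ∉ P2.support) :
    ∃ C : (plusXY B a1 a2 b1 b2).Walk (Sum.inr 1) (Sum.inr 1), C.IsCycle ∧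
        {e | e ∈ C.edges} =
          ({s(Sum.inl a1, Sum.inr 1), s(Sum.inr 1, Sum.inr 0), s(Sum.inr 0, Sum.inl b2),
            s(Sum.inl b2, Sum.inl a1)} : Set (Sym2 (V ⊕ Fin 2))) ∧
        HasConformalCross (plusXY B a1 a2 b1 b2) C := by
  have hdist0 := hdist
  simp only [List.nodup_cons, List.mem_cons, List.not_mem_nil, or_false, not_or,
    not_false_eq_true, List.nodup_nil, and_true] at hdist
  obtain ⟨⟨h12, h1b1, h1b2⟩, ⟨h2b1, h2b2⟩, hbb⟩ := hdist
  have hab : s(a1, b2) ∈ M := hF (by simp)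
  have hab' : s(a2, b1) ∈ M := hF (by simp)
  have e1 : (plusXY B a1 a2 b1 b2).Adj (Sum.inr 1) (Sum.inl a1) :=
    ((adj_inl_one B a1 a2 b1 b2 a1).2 (Or.inl rfl)).symm
  have e2 : (plusXY B a1 a2 b1 b2).Adj (Sum.inl a1) (Sum.inl b2) :=
    (adj_inl_inl B a1 a2 b1 b2 _ _).2 hF1
  have e3 : (plusXY B a1 a2 b1 b2).Adj (Sum.inl b2) (Sum.inr 0) :=
    (adj_inl_zero B a1 a2 b1 b2 b2).2 (Or.inr rfl)
  have e4 : (plusXY B a1 a2 b1 b2).Adj (Sum.inr 0) (Sum.inr 1) :=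
    (adj_one_zero B a1 a2 b1 b2).symm
  have hx : (plusXY B a1 a2 b1 b2).Adj (Sum.inl b1) (Sum.inr 0) :=
    (adj_inl_zero B a1 a2 b1 b2 b1).2 (Or.inl rfl)
  have hy : (plusXY B a1 a2 b1 b2).Adj (Sum.inl a2) (Sum.inr 1) :=
    (adj_inl_one B a1 a2 b1 b2 a2).2 (Or.inr rfl)
  let N : Set (Sym2 (V ⊕ Fin 2)) := {f | (∃ e ∈ M, e ≠ s(a2, b1) ∧ f = Sym2.map Sum.inl e) ∨
    f = s(Sum.inl b1, Sum.inr 0) ∨ f = s(Sum.inl a2, Sum.inr 1)}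
  have hNmem : ∀ f, f ∈ N ↔ (∃ e ∈ M, e ≠ s(a2, b1) ∧ f = Sym2.map Sum.inl e) ∨
    f = s(Sum.inl b1, Sum.inr 0) ∨ f = s(Sum.inl a2, Sum.inr 1) := fun f => Iff.rfl
  have hN : IsPMOn (plusXY B a1 a2 b1 b2) Set.univ N := by
    refine ⟨?_, fun _ _ _ _ => trivial, ?_⟩
    · rintro f (⟨e, he, -, rfl⟩ | rfl | rfl)
      · have := hM.1 e he
        induction e using Sym2.ind with
        | _ p q =>
          rw [Sym2.map_mk, mem_edgeSet, adj_inl_inl]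
          exact this
      · exact hx
      · exact hy
    · intro v _
      by_cases hv1 : v = Sum.inl b1 ∨ v = Sum.inr 0
      · refine ⟨s(Sum.inl b1, Sum.inr 0), ⟨by simp [hNmem], by simpa using hv1⟩, ?_⟩
        rintro f ⟨⟨e, he, hne, rfl⟩ | rfl | rfl, hvf⟩
        · exfalso
          rcases hv1 with rfl | rfl
          · simp only [Sym2.mem_map, Sum.inl.injEq, exists_eq_right] at hvf
            exact hne (pm_unique hM he hab' hvf (by simp))
          · simp [Sym2.mem_map] at hvf
        · rfl
        · exfalso
          rcases hv1 with rfl | rfl <;> simp at hvf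
          exact h2b1 hvf.symm
      by_cases hv2 : v = Sum.inl a2 ∨ v = Sum.inr 1
      · refine ⟨s(Sum.inl a2, Sum.inr 1), ⟨by simp [hNmem], by simpa using hv2⟩, ?_⟩
        rintro f ⟨⟨e, he, hne, rfl⟩ | rfl | rfl, hvf⟩
        · exfalso
          rcases hv2 with rfl | rfl
          · simp only [Sym2.mem_map, Sum.inl.injEq, exists_eq_right] at hvf
            exact hne (pm_unique hM he hab' hvf (by simp))
          · simp [Sym2.mem_map] at hvf
        · exact absurd (by simpa using hvf) hv1
        · rfl
      rcases v with v | i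
      · obtain ⟨e, ⟨he, hve⟩, hu⟩ := hM.2.2 v trivial
        refine ⟨Sym2.map Sum.inl e, ⟨Or.inl ⟨e, he, ?_, rfl⟩, Sym2.mem_map.2 ⟨v, hve, rfl⟩⟩, ?_⟩
        · rintro rfl
          simp at hve hv1 hv2
          tauto
        · rintro f ⟨⟨e', he', hne, rfl⟩ | rfl | rfl, hvf⟩
          · simp only [Sym2.mem_map, Sum.inl.injEq, exists_eq_right] at hvf
            rw [hu e' ⟨he', hvf⟩]
          · exact absurd (by simpa using hvf) hv1
          · exact absurd (by simpa using hvf) hv2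
      · exfalso
        fin_cases i
        · exact hv1 (Or.inr rfl)
        · exact hv2 (Or.inr rfl)
  have hns1 : (Sum.inr 0 : V ⊕ Fin 2) ∉ (emb B a1 a2 b1 b2 P1).support := by
    simp [emb_support]
  have hns2 : (Sum.inr 1 : V ⊕ Fin 2) ∉ (emb B a1 a2 b1 b2 P2.reverse).support := by
    simp [emb_support]
  obtain ⟨A1, K1⟩ := alt_concat (u := Sum.inl a1) (v := Sum.inl b1) hN
    (emb B a1 a2 b1 b2 P1) hx hns1 (by simpa using h1b1)
    (by simp [hNmem]) (by
      intro z hz h1 h2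
      simp only [emb_support, List.mem_map] at hz
      obtain ⟨z, hz, rfl⟩ := hz
      obtain ⟨e, ⟨he, heP, heA, hze⟩, -⟩ := hc1 z
        ⟨hz, fun h => h1 (by rw [h]), fun h => h2 (by rw [h])⟩
      refine ⟨Sym2.map Sum.inl e, Or.inl ⟨e, he, ?_, rfl⟩, ?_, ?_, Sym2.mem_map.2 ⟨z, hze, rfl⟩⟩
      · rintro rfl
        exact (heA b1 (by simp)).2.2 rfl
      · rw [emb_edges]; exact List.mem_map.2 ⟨e, heP, rfl⟩
      · simp only [Sym2.mem_map, Sum.inl.injEq, exists_eq_right]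
        intro h
        exact (heA a1 h).2.1 rfl)
  obtain ⟨A2, K2⟩ := alt_concat (u := Sum.inl b2) (v := Sum.inl a2) hN
    (emb B a1 a2 b1 b2 P2.reverse) hy hns2 (by simpa using fun h => h2b2 h.symm)
    (by simp [hNmem]) (by
      intro z hz h1 h2
      simp only [emb_support, List.mem_map, Walk.support_reverse, List.mem_reverse] at hz
      obtain ⟨z, hz, rfl⟩ := hz
      obtain ⟨e, ⟨he, heP, heA, hze⟩, -⟩ := hc2 z
        ⟨hz, fun h => h2 (by rw [h]), fun h => h1 (by rw [h])⟩
      refine ⟨Sym2.map Sum.inl e, Or.inl ⟨e, he, ?_, rfl⟩, ?_, ?_, Sym2.mem_map.2 ⟨z, hze, rfl⟩⟩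
      · rintro rfl
        exact (heA a2 (by simp)).2.1 rfl
      · rw [emb_edges]; exact List.mem_map.2 ⟨e, by simpa using heP, rfl⟩
      · simp only [Sym2.mem_map, Sum.inl.injEq, exists_eq_right]
        intro h
        exact (heA b2 h).2.2 rfl)
  have hs1 : ∀ z ∈ ((emb B a1 a2 b1 b2 P1).concat hx).support,
      z = Sum.inr 0 ∨ ∃ v ∈ P1.support, z = Sum.inl v := by
    intro z hz
    simp only [Walk.support_concat, emb_support, List.concat_eq_append, List.mem_append,
      List.mem_map, List.mem_singleton] at hz
    rcases hz with ⟨v, hv, rfl⟩ | rfl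
    · exact Or.inr ⟨v, hv, rfl⟩
    · exact Or.inl rfl
  have hs2 : ∀ z ∈ ((emb B a1 a2 b1 b2 P2.reverse).concat hy).support,
      z = Sum.inr 1 ∨ ∃ v ∈ P2.support, z = Sum.inl v := by
    intro z hz
    simp only [Walk.support_concat, emb_support, List.concat_eq_append, List.mem_append,
      List.mem_map, List.mem_singleton, Walk.support_reverse,
      List.mem_reverse] at hz
    rcases hz with ⟨v, hv, rfl⟩ | rfl
    · exact Or.inr ⟨v, hv, rfl⟩
    · exact Or.inl rfl
  have hb2n : b2 ∉ P1.support := fun h => hdisj _ h P2.end_mem_support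
  have ha1n : a1 ∉ P2.support := hdisj _ P1.start_mem_support
  have habN : s(Sum.inl a1, Sum.inl b2) ∈ N := by
    refine Or.inl ⟨s(a1, b2), hab, ?_, rfl⟩
    simp [Sym2.eq_iff, h12, h1b1]
  refine ⟨.cons e1 (.cons e2 (.cons e3 (.cons e4 .nil))), ?_, ?_, ?_⟩
  · simp [Walk.isCycle_def, Walk.isTrail_def, h1b2, Ne.symm h1b2]
  · ext f
    simp only [Walk.edges_cons, Walk.edges_nil, List.mem_cons, List.not_mem_nil, or_false,
      Set.mem_setOf_eq, Set.mem_insert_iff, Set.mem_singleton_iff]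
    rw [Sym2.eq_swap (a := Sum.inr 1) (b := Sum.inl a1),
      Sym2.eq_swap (a := Sum.inl a1) (b := Sum.inl b2),
      Sym2.eq_swap (a := Sum.inl b2) (b := Sum.inr 0),
      Sym2.eq_swap (a := Sum.inr 0) (b := Sum.inr 1)]
    tauto
  · refine ⟨N, Sum.inl a1, Sum.inr 0, Sum.inl b2, Sum.inr 1,
      (emb B a1 a2 b1 b2 P1).concat hx,
      (emb B a1 a2 b1 b2 P2.reverse).concat hy, ⟨hN, ?_, ?_, ?_, ?_, A1, A2, ?_, ?_, ?_⟩,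
      N, hN, ?_⟩
    · simp [h1b2]
    · exact ⟨0, Or.inl (by simp)⟩
    · rw [Walk.concat_isPath_iff]
      exact ⟨(emb_isPath B a1 a2 b1 b2 _).2 hP1, hns1⟩
    · rw [Walk.concat_isPath_iff]
      exact ⟨(emb_isPath B a1 a2 b1 b2 _).2 hP2.reverse, hns2⟩
    · intro z hz hz'
      rcases hs1 z hz with rfl | ⟨v, hv, rfl⟩
      · simpa using hs2 _ hz'
      · have := hs2 _ hz'
        simp at this
        exact hdisj v hv this
    · intro z hz h1 h2
      rcases hs1 z hz with rfl | ⟨v, hv, rfl⟩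
      · exact absurd rfl h2
      · have : v ≠ b2 := by rintro rfl; exact hb2n hv
        simp at h1
        simp [h1, this]
    · intro z hz h1 h2
      rcases hs2 z hz with rfl | ⟨v, hv, rfl⟩
      · exact absurd rfl h2
      · have : v ≠ a1 := by rintro rfl; exact ha1n hv
        simp at h1
        simp [h1, this]
    · have key : ∀ z, (z ∈ ((emb B a1 a2 b1 b2 P1).concat hx).support ∨
          z ∈ ((emb B a1 a2 b1 b2 P2.reverse).concat hy).support) → ∃ e ∈ N,
          (e ∈ (Walk.cons e1 (.cons e2 (.cons e3 (.cons e4 .nil)))).edges ∨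
           e ∈ ((emb B a1 a2 b1 b2 P1).concat hx).edges ∨
           e ∈ ((emb B a1 a2 b1 b2 P2.reverse).concat hy).edges) ∧ z ∈ e := by
        intro z hz
        by_cases h : z = Sum.inl a1 ∨ z = Sum.inl b2
        · exact ⟨_, habN, Or.inl (by simp), by simpa using h⟩
        push Not at h
        rcases hz with hz | hz
        · obtain ⟨e, he, h1, h2⟩ := K1 z hz h.1
          exact ⟨e, he, Or.inr (Or.inl h1), h2⟩
        · obtain ⟨e, he, h1, h2⟩ := K2 z hz h.2
          exact ⟨e, he, Or.inr (Or.inr h1), h2⟩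
      intro z hz
      have hz' : z ∈ ((emb B a1 a2 b1 b2 P1).concat hx).support ∨
          z ∈ ((emb B a1 a2 b1 b2 P2.reverse).concat hy).support := by
        rcases hz with (hz | hz) | hz
        · simp only [Walk.support_cons, Walk.support_nil, List.mem_cons, List.not_mem_nil,
            or_false, Set.mem_setOf_eq] at hz
          rcases hz with rfl | rfl | rfl | rfl | rfl
          · exact Or.inr (Walk.end_mem_support _)
          · exact Or.inl (Walk.start_mem_support _)
          · exact Or.inr (Walk.start_mem_support _)
          · exact Or.inl (Walk.end_mem_support _)
          · exact Or.inr (Walk.end_mem_support _)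
        · exact Or.inl hz
        · exact Or.inr hz
      obtain ⟨e, he, h1, h2⟩ := key z hz'
      refine ⟨e, ⟨he, ?_, h2⟩, ?_⟩
      · rcases h1 with h | h | h
        · exact Or.inl (Or.inl h)
        · exact Or.inl (Or.inr h)
        · exact Or.inr h
      · rintro f ⟨hf, -, hzf⟩
        exact pm_unique hN hf he hzf h2

/-- a size-two extendible cover instance of 2-MLP is equivalent to the
existence of a conformal cross over the 4-cycle `a1 y x b2` in `B⁺`. -/
theorem statement_12 {V : Type*} [Fintype V] [DecidableEq V] (B : SimpleGraph V)
    (V1 V2 : Set V) (hbip : IsBipartitionOf B V1 V2) (hpm : ∃ M, IsPM B M)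
    (a1 a2 b1 b2 : V)
    (ha1 : a1 ∈ V1) (ha2 : a2 ∈ V1) (hb1 : b1 ∈ V2) (hb2 : b2 ∈ V2)
    (hdist : [a1, a2, b1, b2].Nodup)
    (hcover : IsSCover B {a1, a2, b1, b2} ({s(a1, b2), s(a2, b1)} : Set (Sym2 V)))
    (hext : Extendible B ({s(a1, b2), s(a2, b1)} : Set (Sym2 V))) :
    TwoMLPInstanceOn B Set.univ a1 a2 b1 b2 {s(a1, b2), s(a2, b1)} ↔
      ∃ C : (plusXY B a1 a2 b1 b2).Walk (Sum.inr 1) (Sum.inr 1), C.IsCycle ∧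
        {e | e ∈ C.edges} =
          ({s(Sum.inl a1, Sum.inr 1), s(Sum.inr 1, Sum.inr 0), s(Sum.inr 0, Sum.inl b2),
            s(Sum.inl b2, Sum.inl a1)} : Set (Sym2 (V ⊕ Fin 2))) ∧
        HasConformalCross (plusXY B a1 a2 b1 b2) C := by
  have hdist' := hdist
  simp only [List.nodup_cons, List.mem_cons, List.not_mem_nil, or_false, not_or,
    not_false_eq_true, List.nodup_nil, and_true] at hdist'
  have hab : a1 ≠ b2 := hdist'.1.2.2
  have hF1 : B.Adj a1 b2 := (mem_edgeSet B).1 (hcover.1 (Or.inl rfl))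
  have hF2 : B.Adj a2 b1 := (mem_edgeSet B).1 (hcover.1 (Or.inr rfl))
  constructor
  · rintro ⟨M, hM, hF, P1, P2, hP1, hP2, hc1, hc2, hd⟩
    exact core_fwd B a1 a2 b1 b2 hdist hF1 M hM hF P1 P2 hP1 hP2 hc1 hc2 hd
  · rintro ⟨C, hC, hE, M, s1, t1, s2, t2, P1, P2,
      ⟨-, hnd, ⟨n, hcyc⟩, hP1, hP2, -, -, hdisj, hint1, hint2⟩, N, hN, hNM⟩
    have hshape := cycle_shape B a1 a2 b1 b2 hab C hC hE
    have hsup : ∀ z, (z = Sum.inl a1 ∨ z = Sum.inl b2 ∨ z = Sum.inr 0 ∨ z = Sum.inr 1) →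
        z ∈ C.support := by
      intro z hz
      apply List.mem_of_mem_tail
      rcases hz with rfl | rfl | rfl | rfl <;> rcases hshape with h | h <;> rw [h] <;> simp
    have hM : ∀ x, x ∈ P1.support ∨ x ∈ P2.support →
      ∃ e ∈ N, (e ∈ {e | e ∈ C.edges} ∨ e ∈ P1.edges ∨ e ∈ P2.edges) ∧ x ∈ e := by
      intro x hx
      obtain ⟨e, ⟨he, h1, h2⟩, -⟩ := hNM x (by
        rcases hx with h | h
        · exact Or.inl (Or.inr h)
        · exact Or.inr h)
      refine ⟨e, he, ?_, h2⟩
      rcases h1 with (h | h) | h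
      · exact Or.inl h
      · exact Or.inr (Or.inl h)
      · exact Or.inr (Or.inr h)
    have fin : ∀ (Q1 : (plusXY B a1 a2 b1 b2).Walk (Sum.inl a1) (Sum.inr 0))
        (Q2 : (plusXY B a1 a2 b1 b2).Walk (Sum.inl b2) (Sum.inr 1)), Q1.IsPath → Q2.IsPath →
        (∀ x, x ∈ Q1.support → x ∉ Q2.support) →
        (∀ x ∈ Q1.support, x ≠ Sum.inl a1 → x ≠ Sum.inr 0 → x ∉ C.support) →
        (∀ x ∈ Q2.support, x ≠ Sum.inl b2 → x ≠ Sum.inr 1 → x ∉ C.support) →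
        (∀ x, x ∈ Q1.support ∨ x ∈ Q2.support →
          ∃ e ∈ N, (e ∈ {e | e ∈ C.edges} ∨ e ∈ Q1.edges ∨ e ∈ Q2.edges) ∧ x ∈ e) →
        TwoMLPInstanceOn B Set.univ a1 a2 b1 b2 {s(a1, b2), s(a2, b1)} := by
      intro Q1 Q2 hQ1 hQ2 hd hi1 hi2 hm
      refine core_back B V1 V2 hbip a1 a2 b1 b2 ha1 ha2 hb1 hb2 hdist hF1 hF2 Q1 Q2 hQ1 hQ2 hd
        N hN _ hE ?_ ?_ hm
      · intro x hx h1 h2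
        have := hi1 x hx h1 h2
        exact ⟨fun h => this (hsup _ (Or.inr (Or.inl h))),
          fun h => this (hsup _ (Or.inr (Or.inr (Or.inr h))))⟩
      · intro x hx h1 h2
        have := hi2 x hx h1 h2
        exact ⟨fun h => this (hsup _ (Or.inl h)),
          fun h => this (hsup _ (Or.inr (Or.inr (Or.inl h))))⟩
    have hends : ((s1 = Sum.inl a1 ∧ t1 = Sum.inr 0) ∨ (s1 = Sum.inr 0 ∧ t1 = Sum.inl a1)) ∧
          ((s2 = Sum.inl b2 ∧ t2 = Sum.inr 1) ∨ (s2 = Sum.inr 1 ∧ t2 = Sum.inl b2)) ∨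
        ((s2 = Sum.inl a1 ∧ t2 = Sum.inr 0) ∨ (s2 = Sum.inr 0 ∧ t2 = Sum.inl a1)) ∧
          ((s1 = Sum.inl b2 ∧ t1 = Sum.inr 1) ∨ (s1 = Sum.inr 1 ∧ t1 = Sum.inl b2)) := by
      rcases hshape with h | h <;> rw [h] at hcyc <;> rcases hcyc with hcyc | hcyc <;>
        rcases rot_cases _ _ _ _ _ _ _ _ _ hcyc with
          ⟨h1, h2, h3, h4⟩ | ⟨h1, h2, h3, h4⟩ | ⟨h1, h2, h3, h4⟩ | ⟨h1, h2, h3, h4⟩ <;>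
        rw [h1, h2, h3, h4] <;> simp
    have hdisj' : ∀ x, x ∈ P2.support → x ∉ P1.support := fun x h1 h2 => hdisj x h2 h1
    have hint1' : ∀ x ∈ P1.support, x ≠ t1 → x ≠ s1 → x ∉ C.support :=
      fun x hx h1 h2 => hint1 x hx h2 h1
    have hint2' : ∀ x ∈ P2.support, x ≠ t2 → x ≠ s2 → x ∉ C.support :=
      fun x hx h1 h2 => hint2 x hx h2 h1
    have hM' : ∀ x, x ∈ P2.support ∨ x ∈ P1.support →
      ∃ e ∈ N, (e ∈ {e | e ∈ C.edges} ∨ e ∈ P2.edges ∨ e ∈ P1.edges) ∧ x ∈ e := by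
      intro x hx
      obtain ⟨e, he, h1, h2⟩ := hM x hx.symm
      exact ⟨e, he, h1.imp_right Or.symm, h2⟩
    rcases hends with ⟨⟨rfl, rfl⟩ | ⟨rfl, rfl⟩, ⟨rfl, rfl⟩ | ⟨rfl, rfl⟩⟩ |
      ⟨⟨rfl, rfl⟩ | ⟨rfl, rfl⟩, ⟨rfl, rfl⟩ | ⟨rfl, rfl⟩⟩
    · exact fin P1 P2 hP1 hP2 hdisj hint1 hint2 hM
    · exact fin P1 P2.reverse hP1 hP2.reverse (by simpa using hdisj) hint1
        (by simpa using hint2') (by simpa using hM)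
    · exact fin P1.reverse P2 hP1.reverse hP2 (by simpa using hdisj) (by simpa using hint1')
        hint2 (by simpa using hM)
    · exact fin P1.reverse P2.reverse hP1.reverse hP2.reverse (by simpa using hdisj)
        (by simpa using hint1') (by simpa using hint2') (by simpa using hM)
    · exact fin P2 P1 hP2 hP1 hdisj' hint2 hint1 hM'
    · exact fin P2 P1.reverse hP2 hP1.reverse (by simpa using hdisj') hint2
        (by simpa using hint1') (by simpa using hM')
    · exact fin P2.reverse P1 hP2.reverse hP1 (by simpa using hdisj') (by simpa using hint2')
        hint1 (by simpa using hM')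
    · exact fin P2.reverse P1.reverse hP2.reverse hP1.reverse (by simpa using hdisj')
        (by simpa using hint2') (by simpa using hint1') (by simpa using hM')


end Paper
end
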